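/- Every finitely generated co-Hopfian virtually free group G is ∀∃-homogeneous: for every n and any two n-tuples u⃗ and v⃗ of elements of G having the same ∀∃-type, there exists an automorphism of G mapping u⃗ to v⃗. -/

import Mathlib

open FirstOrder Language

/-- Function symbols of the first-order language of groups:
a binary multiplication, a unary inverse and a constant for the identity. -/
inductive GroupFunc : ℕ → Type
  | mul : GroupFunc 2
  | inv : GroupFunc 1
  | one : GroupFunc 0

/-- The first-order language of groups. -/
def groupLang : FirstOrder.Language :=
  { Functions := GroupFunc
    Relations := fun _ => Empty }

/-- Every group is a structure for the language of groups in the natural way. -/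
instance groupLangStructure (G : Type*) [Group G] : groupLang.Structure G where
  funMap {n} f v :=
    match f with
    | .mul => v 0 * v 1
    | .inv => (v 0)⁻¹
    | .one => 1
  RelMap {n} r _ := r.elim

/-- Existential formulas: iterated existential quantifications of a
quantifier-free formula. -/
inductive IsExistentialQF {α : Type*} : ∀ {n : ℕ}, groupLang.BoundedFormula α n → Prop
  | of_isQF {n : ℕ} {φ : groupLang.BoundedFormula α n} (h : φ.IsQF) : IsExistentialQF φ
  | ex {n : ℕ} {φ : groupLang.BoundedFormula α (n + 1)} (h : IsExistentialQF φ) :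
      IsExistentialQF φ.ex

/-- Universal formulas: iterated universal quantifications of a
quantifier-free formula. -/
inductive IsUniversalQF {α : Type*} : ∀ {n : ℕ}, groupLang.BoundedFormula α n → Prop
  | of_isQF {n : ℕ} {φ : groupLang.BoundedFormula α n} (h : φ.IsQF) : IsUniversalQF φ
  | all {n : ℕ} {φ : groupLang.BoundedFormula α (n + 1)} (h : IsUniversalQF φ) :
      IsUniversalQF φ.all

/-- ∀∃-formulas: iterated universal quantifications of an existential formula. -/
inductive IsAE {α : Type*} : ∀ {n : ℕ}, groupLang.BoundedFormula α n → Prop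
  | of_existential {n : ℕ} {φ : groupLang.BoundedFormula α n} (h : IsExistentialQF φ) : IsAE φ
  | all {n : ℕ} {φ : groupLang.BoundedFormula α (n + 1)} (h : IsAE φ) : IsAE φ.all

/-- A group is virtually free if it has a free subgroup of finite index. -/
def VirtuallyFree (G : Type*) [Group G] : Prop :=
  ∃ H : Subgroup G, H.FiniteIndex ∧ Nonempty (IsFreeGroup H)

/-- A group is co-Hopfian if every injective endomorphism is surjective. -/
def CoHopfian (G : Type*) [Group G] : Prop :=
  ∀ φ : G →* G, Function.Injective φ → Function.Surjective φ

/-- Two homomorphisms `φ, φ' : G → G'` are equivalent if they coincide up to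
conjugation on every finite subgroup of `G`. -/
def HomEquiv {G G' : Type*} [Group G] [Group G'] (φ φ' : G →* G') : Prop :=
  ∀ H : Subgroup G, (H : Set G).Finite →
    ∃ g' : G', ∀ h ∈ H, φ' h = g' * φ h * g'⁻¹

/-- Two groups are ∀∃-equivalent if they satisfy the same ∀∃-sentences. -/
def AEEquivalent (G : Type*) (G' : Type*) [Group G] [Group G'] : Prop :=
  ∀ φ : groupLang.Sentence, IsAE φ → (G ⊨ φ ↔ G' ⊨ φ)

/-- Two groups are ∃-equivalent if they satisfy the same existential sentences. -/
def ExistentiallyEquivalent (G : Type*) (G' : Type*) [Group G] [Group G'] : Prop :=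
  ∀ φ : groupLang.Sentence, IsExistentialQF φ → (G ⊨ φ ↔ G' ⊨ φ)

/-- An endomorphism is rigid-testing: `G` is rigid if every endomorphism
equivalent to the identity is an automorphism. -/
def Rigid (G : Type*) [Group G] : Prop :=
  ∀ φ : G →* G, HomEquiv φ (MonoidHom.id G) → Function.Bijective φ

/-- `Out G` is finite, expressed as: the inner automorphisms form a finite index
subgroup of `Aut G`. -/
def OutFinite (G : Type*) [Group G] : Prop :=
  (MulAut.conj : G →* MulAut G).range.FiniteIndex

/-- Iterated composition of an endomorphism. -/
def homPow {G : Type*} [Group G] (φ : G →* G) : ℕ → (G →* G)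
  | 0 => MonoidHom.id G
  | n + 1 => φ.comp (homPow φ n)

/-- An endomorphism `φ` of `G` is class-permuting if some positive power of `φ`
is equivalent to the identity of `G`. -/
def ClassPermuting {G : Type*} [Group G] (φ : G →* G) : Prop :=
  ∃ n : ℕ, 1 ≤ n ∧ HomEquiv (homPow φ n) (MonoidHom.id G)

/-- A maximal finite subgroup: a finite subgroup maximal with respect to
inclusion among finite subgroups. -/
def MaximalFiniteSubgroup {G : Type*} [Group G] (A : Subgroup G) : Prop :=
  (A : Set G).Finite ∧ ∀ B : Subgroup G, (B : Set G).Finite → A ≤ B → A = B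

/-- Two subgroups are conjugate. -/
def SubgroupConj {G : Type*} [Group G] (A B : Subgroup G) : Prop :=
  ∃ g : G, B = A.map (MulAut.conj g).toMonoidHom

/-- A group is strongly co-Hopfian if there is a finite subset `F` of
`G \ {1}` such that every endomorphism whose kernel misses `F` is an
automorphism. -/
def StronglyCoHopfian (G : Type*) [Group G] : Prop :=
  ∃ F : Finset G, (1 : G) ∉ F ∧
    ∀ φ : G →* G, (∀ f ∈ F, φ f ≠ 1) → Function.Bijective φ

/-- A group is finitely presented. -/
def GroupFinitelyPresented (G : Type*) [Group G] : Prop :=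
  ∃ (n : ℕ) (rels : Finset (FreeGroup (Fin n))),
    Nonempty (PresentedGroup (rels : Set (FreeGroup (Fin n))) ≃* G)

section
/-- A group acting on a tree, encoded by vertices and (oriented) walls. -/
structure GTree (G V W : Type*) [Group G] [MulAction G V] [MulAction G W] where
  mem : V → W → Prop
  mem_smul : ∀ (g : G) v a, mem (g • v) (g • a) ↔ mem v a
  p : W → V
  q : W → V
  p_not : ∀ a, ¬ mem (p a) a
  q_mem : ∀ a, mem (q a) a
  pq : ∀ a b, b ≠ a → (mem (p a) b ↔ mem (q a) b)
  nested : ∀ a b, a ≠ b → (∀ v, mem v a → mem v b) ∨ (∀ v, mem v b → mem v a) ∨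
    (∀ v, ¬ (mem v a ∧ mem v b)) ∨ (∀ v, mem v a ∨ mem v b)
  fin : ∀ v w, {a | ¬ (mem v a ↔ mem w a)}.Finite
  ext : ∀ v w, (∀ a, mem v a ↔ mem w a) → v = w

namespace GTree
variable {G V W : Type*} [Group G] [MulAction G V] [MulAction G W] (T : GTree G V W)

/-- the walls separating two vertices -/
def sepw (v w : V) : Set W := {a | ¬ (T.mem v a ↔ T.mem w a)}

lemma uniq {a : W} {v w v' w' : V} (hv : ¬ T.mem v a) (hv' : ¬ T.mem v' a)
    (hw : T.mem w a) (hw' : T.mem w' a) (h : ∀ b, b ≠ a → (T.mem v b ↔ T.mem w b))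
    (h' : ∀ b, b ≠ a → (T.mem v' b ↔ T.mem w' b)) : v = v' ∧ w = w' := by
  have key : ∀ b, b ≠ a → (T.mem v b ↔ T.mem v' b) := by
    intro b hb
    have h1 := h b hb
    have h2 := h' b hb
    rcases T.nested a b (Ne.symm hb) with h3 | h3 | h3 | h3 <;>
    · have a1 := h3 v
      have a2 := h3 v'
      have a3 := h3 w
      have a4 := h3 w'
      tauto
  constructor
  · apply T.ext
    intro b
    by_cases hb : b = a
    · subst hb; tauto
    · exact key b hb
  · apply T.ext
    intro b
    by_cases hb : b = a
    · subst hb; tauto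
    · have h1 := h b hb
      have h2 := h' b hb
      have := key b hb
      tauto

lemma mem_smul' (g : G) (v : V) (a : W) : T.mem (g • v) a ↔ T.mem v (g⁻¹ • a) := by
  rw [← T.mem_smul g v (g⁻¹ • a), smul_inv_smul]

lemma pq_smul (g : G) (a : W) : T.p (g • a) = g • T.p a ∧ T.q (g • a) = g • T.q a := by
  apply T.uniq (a := g • a) (T.p_not _) _ (T.q_mem _) _ (T.pq _) _
  · rw [T.mem_smul]; exact T.p_not a
  · rw [T.mem_smul]; exact T.q_mem a
  · intro b hb
    rw [T.mem_smul', T.mem_smul']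
    apply T.pq
    intro h
    apply hb
    rw [← h, smul_inv_smul]

lemma p_smul (g : G) (a : W) : T.p (g • a) = g • T.p a := (T.pq_smul g a).1
lemma q_smul (g : G) (a : W) : T.q (g • a) = g • T.q a := (T.pq_smul g a).2

lemma step {v w : V} (hvw : v ≠ w) : ∃ a ∈ T.sepw v w,
    ((v = T.p a ∧ T.sepw (T.q a) w ⊂ T.sepw v w) ∨ (v = T.q a ∧ T.sepw (T.p a) w ⊂ T.sepw v w)) := by
  have hne : (T.sepw v w).Nonempty := by
    by_contra h
    apply hvw
    apply T.ext
    intro a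
    by_contra ha
    exact h ⟨a, ha⟩
  obtain ⟨a, ha, hmax⟩ := (T.fin v w).exists_maximalFor
    (fun a => {x | T.mem x a ↔ T.mem w a}) _ hne
  refine ⟨a, ha, ?_⟩
  have hmax' : ∀ b, ¬ (T.mem v b ↔ T.mem w b) → (∀ x, (T.mem x a ↔ T.mem w a) → (T.mem x b ↔ T.mem w b)) →
      (∀ x, (T.mem x b ↔ T.mem w b) → (T.mem x a ↔ T.mem w a)) := by
    intro b hb h1 x hx
    exact hmax hb h1 hx
  have ha' : ¬ (T.mem v a ↔ T.mem w a) := ha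
  have sub : ∀ x y : V, (∀ b, b ≠ a → (T.mem x b ↔ T.mem y b)) → (T.mem y a ↔ T.mem w a) → v = x →
      T.sepw y w ⊂ T.sepw v w := by
    intro x y hxy hy hvx
    constructor
    · intro b hb
      have hb' : ¬ (T.mem y b ↔ T.mem w b) := hb
      have : b ≠ a := by rintro rfl; exact hb' hy
      change ¬ (T.mem v b ↔ T.mem w b)
      have := hxy b this
      rw [hvx]; grind
    · intro h
      exact h ha hy
  have hp := T.p_not a
  have hq := T.q_mem a
  by_cases hwa : T.mem w a
  · left
    have hva : ¬ T.mem v a := by grind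
    have : v = T.p a := by
      apply T.ext
      intro b
      by_cases hb : b = a
      · subst hb; grind
      · by_contra hne
        have hpq := T.pq a b hb
        have key : ∀ x, T.mem x a → (T.mem x b ↔ T.mem (T.p a) b) := by
          intro x hx
          rcases T.nested a b (Ne.symm hb) with h3 | h3 | h3 | h3 <;>
          · have a1 := h3 x
            have a2 := h3 v
            have a3 := h3 (T.p a)
            have a4 := h3 (T.q a)
            grind
        have k1 := key w hwa
        have := hmax' b (by grind) (by intro x hx; have := key x (by grind); tauto) (T.p a) (by grind)
        grind
    exact ⟨this, sub _ _ (T.pq a) (by grind) this⟩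
  · right
    have hva : T.mem v a := by grind
    have : v = T.q a := by
      apply T.ext
      intro b
      by_cases hb : b = a
      · subst hb; grind
      · by_contra hne
        have hpq := T.pq a b hb
        have key : ∀ x, ¬ T.mem x a → (T.mem x b ↔ T.mem (T.p a) b) := by
          intro x hx
          rcases T.nested a b (Ne.symm hb) with h3 | h3 | h3 | h3 <;>
          · have a1 := h3 x
            have a2 := h3 v
            have a3 := h3 (T.p a)
            have a4 := h3 (T.q a)
            grind
        have k1 := key w hwa
        have := hmax' b (by grind) (by intro x hx; have := key x (by grind); tauto) (T.q a) (by grind)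
        grind
    exact ⟨this, sub _ _ (fun b hb => (T.pq a b hb).symm) (by grind) this⟩

lemma const_of {X : Type*} (f : V → X) (v w : V) (h : ∀ a ∈ T.sepw v w, f (T.p a) = f (T.q a)) :
    f v = f w := by
  by_cases hvw : v = w
  · rw [hvw]
  obtain ⟨a, ha, h1⟩ := T.step hvw
  have hlt : ∀ y, T.sepw y w ⊂ T.sepw v w → f y = f w := by
    intro y hy
    have hdec : (T.sepw y w).ncard < (T.sepw v w).ncard := Set.ncard_lt_ncard hy (T.fin v w)
    exact const_of f y w (fun b hb => h b (hy.1 hb))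
  rcases h1 with ⟨h1, h2⟩ | ⟨h1, h2⟩
  · rw [h1, h a ha]; exact hlt _ h2
  · rw [h1, ← h a ha]; exact hlt _ h2
termination_by (T.sepw v w).ncard

lemma const_all {X : Type*} (f : V → X) (h : ∀ a, f (T.p a) = f (T.q a)) (v w : V) : f v = f w :=
  T.const_of f v w (fun a _ => h a)

lemma p_ne_q (a : W) : T.p a ≠ T.q a := by
  intro h
  have := T.p_not a
  rw [h] at this
  exact this (T.q_mem a)

/-- the wall incident to a vertex pointing towards the root is unique -/
lemma wall_unique {x y y' v0 : V} {a a' : W} (ha : a ∈ T.sepw x v0) (ha' : a' ∈ T.sepw x v0)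
    (hy : ∀ b, b ≠ a → (T.mem x b ↔ T.mem y b)) (hya : ¬ (T.mem x a ↔ T.mem y a))
    (hy' : ∀ b, b ≠ a' → (T.mem x b ↔ T.mem y' b)) (hya' : ¬ (T.mem x a' ↔ T.mem y' a')) : a = a' := by
  by_contra hne
  have h1 := hy a' (Ne.symm hne)
  have h2 := hy' a hne
  have h3 : ¬ (T.mem x a ↔ T.mem v0 a) := ha
  have h4 : ¬ (T.mem x a' ↔ T.mem v0 a') := ha'
  rcases T.nested a a' hne with h | h | h | h <;>
  · have a1 := h x
    have a2 := h y
    have a3 := h y'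
    have a4 := h v0
    grind

open Classical in
lemma integrate {X : Type*} [Group X] [Nonempty V] (z : W → X) :
    ∃ η : V → X, ∀ a, η (T.q a) = η (T.p a) * z a := by
  obtain ⟨v0⟩ := ‹Nonempty V›
  by_cases hW : Nonempty W
  swap
  · exact ⟨fun _ => 1, fun a => absurd ⟨a⟩ hW⟩
  obtain ⟨a0⟩ := hW
  have hst : ∀ v, ∃ a : W, v ≠ v0 → a ∈ T.sepw v v0 ∧
      ((v = T.p a ∧ T.sepw (T.q a) v0 ⊂ T.sepw v v0) ∨
       (v = T.q a ∧ T.sepw (T.p a) v0 ⊂ T.sepw v v0)) := by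
    intro v
    by_cases hv : v = v0
    · exact ⟨a0, fun h => absurd hv h⟩
    · obtain ⟨a, ha, h⟩ := T.step hv
      exact ⟨a, fun _ => ⟨ha, h⟩⟩
  choose nx hnx using hst
  let m : V → ℕ := fun v => (T.sepw v v0).ncard
  let F : (v : V) → ((w : V) → m w < m v → X) → X := fun v rec =>
    if v = v0 then 1 else
    if h : v = T.p (nx v) ∧ m (T.q (nx v)) < m v then rec _ h.2 * (z (nx v))⁻¹ else
    if h : v = T.q (nx v) ∧ m (T.p (nx v)) < m v then rec _ h.2 * z (nx v) else 1
  let η : V → X := (measure m).wf.fix F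
  have hη : ∀ v, η v = F v (fun w _ => η w) := fun v => (measure m).wf.fix_eq F v
  refine ⟨η, fun a => ?_⟩
  have hlt : ∀ y v, T.sepw y v0 ⊂ T.sepw v v0 → m y < m v :=
    fun y v hy => Set.ncard_lt_ncard hy (T.fin v v0)
  have hp := T.p_not a
  have hq := T.q_mem a
  have hpq := T.pq a
  by_cases h0 : T.mem v0 a
  · have h1 : a ∈ T.sepw (T.p a) v0 := by change ¬ (_ ↔ _); tauto
    have h2 : T.p a ≠ v0 := by rintro h; rw [h] at hp; exact hp h0
    obtain ⟨h3, h4⟩ := hnx _ h2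
    have h5 : a = nx (T.p a) := by
      rcases h4 with ⟨h4, -⟩ | ⟨h4, -⟩
      · refine T.wall_unique (x := T.p a) (y := T.q a) (y' := T.q (nx (T.p a))) h1 h3 hpq (by tauto) ?_ ?_
        · have := T.pq (nx (T.p a))
          rw [← h4] at this; exact this
        · have h6 := T.p_not (nx (T.p a))
          have h7 := T.q_mem (nx (T.p a))
          rw [← h4] at h6; tauto
      · refine T.wall_unique (x := T.p a) (y := T.q a) (y' := T.p (nx (T.p a))) h1 h3 hpq (by tauto) ?_ ?_
        · have := T.pq (nx (T.p a))
          rw [← h4] at this; exact fun b hb => (this b hb).symm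
        · have h6 := T.p_not (nx (T.p a))
          have h7 := T.q_mem (nx (T.p a))
          rw [← h4] at h7; tauto
    rw [← h5] at h4
    have h6 : m (T.q a) < m (T.p a) := by
      rcases h4 with h4 | h4
      · exact hlt _ _ h4.2
      · exact absurd h4.1 (T.p_ne_q a)
    have : η (T.p a) = η (T.q a) * (z a)⁻¹ := by
      rw [hη (T.p a)]
      simp only [F]
      rw [if_neg h2]
      simp only [← h5]
      rw [dif_pos ⟨trivial, h6⟩]
    rw [this]; group
  · have h1 : a ∈ T.sepw (T.q a) v0 := by change ¬ (_ ↔ _); tauto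
    have h2 : T.q a ≠ v0 := by rintro h; rw [h] at hq; exact h0 hq
    obtain ⟨h3, h4⟩ := hnx _ h2
    have hpq' := fun b hb => (hpq b hb).symm
    have h5 : a = nx (T.q a) := by
      rcases h4 with ⟨h4, -⟩ | ⟨h4, -⟩
      · refine T.wall_unique (x := T.q a) (y := T.p a) (y' := T.q (nx (T.q a))) h1 h3 hpq' (by tauto) ?_ ?_
        · have := T.pq (nx (T.q a))
          rw [← h4] at this; exact this
        · have h6 := T.p_not (nx (T.q a))
          have h7 := T.q_mem (nx (T.q a))
          rw [← h4] at h6; tauto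
      · refine T.wall_unique (x := T.q a) (y := T.p a) (y' := T.p (nx (T.q a))) h1 h3 hpq' (by tauto) ?_ ?_
        · have := T.pq (nx (T.q a))
          rw [← h4] at this; exact fun b hb => (this b hb).symm
        · have h6 := T.p_not (nx (T.q a))
          have h7 := T.q_mem (nx (T.q a))
          rw [← h4] at h7; tauto
    rw [← h5] at h4
    have h6 : m (T.p a) < m (T.q a) := by
      rcases h4 with h4 | h4
      · exact absurd h4.1.symm (T.p_ne_q a)
      · exact hlt _ _ h4.2
    rw [hη (T.q a)]
    simp only [F]
    rw [if_neg h2]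
    simp only [← h5]
    rw [dif_neg (fun h => T.p_ne_q a h.1.symm), dif_pos ⟨trivial, h6⟩]

/-- equivariant twisting data give an endomorphism -/
lemma exists_twist [Nonempty V] (z : W → G) (hz : ∀ (g : G) a, z (g • a) = g * z a * g⁻¹) :
    ∃ (ψ : G →* G) (η : V → G), (∀ a, η (T.q a) = η (T.p a) * z a) ∧
      ∀ g v, ψ g = η (g • v) * g * (η v)⁻¹ := by
  obtain ⟨η, hη⟩ := T.integrate z
  obtain ⟨v0⟩ := ‹Nonempty V›
  have key : ∀ g v w, η (g • v) * g * (η v)⁻¹ = η (g • w) * g * (η w)⁻¹ := by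
    intro g
    apply T.const_all (fun v => η (g • v) * g * (η v)⁻¹)
    intro a
    rw [← T.p_smul, ← T.q_smul, hη, hη, hz]
    group
  refine ⟨⟨⟨fun g => η (g • v0) * g * (η v0)⁻¹, ?_⟩, ?_⟩, η, hη, fun g v => key g v0 v⟩
  · simp
  · intro g h
    change η ((g * h) • v0) * (g * h) * (η v0)⁻¹ = η (g • v0) * g * (η v0)⁻¹ * (η (h • v0) * h * (η v0)⁻¹)
    rw [key g v0 (h • v0), smul_smul]
    group

end GTree

end

section
namespace GTree
variable {G V W : Type*} [Group G] [MulAction G V] [MulAction G W] (T : GTree G V W)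

/-- membership in an oriented halfspace -/
def inn (x : V) (A : W × Bool) : Prop := T.mem x A.1 ↔ A.2 = true

/-- outer endpoint -/
def st (A : W × Bool) : V := if A.2 = true then T.p A.1 else T.q A.1
/-- inner endpoint -/
def en (A : W × Bool) : V := if A.2 = true then T.q A.1 else T.p A.1
/-- twist -/
def zz (z : W → G) (A : W × Bool) : G := if A.2 = true then z A.1 else (z A.1)⁻¹
/-- opposite halfspace -/
def opp (A : W × Bool) : W × Bool := (A.1, !A.2)
/-- translate -/
def act (g : G) (A : W × Bool) : W × Bool := (g • A.1, A.2)

/-- same vertex after collapsing walls outside O -/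
def simO (O : Set W) (x y : V) : Prop := ∀ b ∈ O, T.mem x b ↔ T.mem y b

lemma inn_opp (x : V) (A : W × Bool) : T.inn x (opp A) ↔ ¬ T.inn x A := by
  obtain ⟨a, e⟩ := A
  cases e <;> simp [inn, opp]

lemma st_opp (A : W × Bool) : T.st (opp A) = T.en A := by
  obtain ⟨a, e⟩ := A
  cases e <;> simp [st, en, opp]

lemma en_opp (A : W × Bool) : T.en (opp A) = T.st A := by
  obtain ⟨a, e⟩ := A
  cases e <;> simp [st, en, opp]

lemma zz_opp (z : W → G) (A : W × Bool) : zz z (opp A) = (zz z A)⁻¹ := by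
  obtain ⟨a, e⟩ := A
  cases e <;> simp [zz, opp]

lemma inn_act (g : G) (x : V) (A : W × Bool) : T.inn (g • x) (act g A) ↔ T.inn x A := by
  simp [inn, act, T.mem_smul]

lemma inn_act' (g : G) (x : V) (A : W × Bool) : T.inn x (act g A) ↔ T.inn (g⁻¹ • x) A := by
  rw [← T.inn_act g (g⁻¹ • x), smul_inv_smul]

lemma st_act (g : G) (A : W × Bool) : T.st (act g A) = g • T.st A := by
  unfold st act; split_ifs <;> simp [T.p_smul, T.q_smul]

lemma en_act (g : G) (A : W × Bool) : T.en (act g A) = g • T.en A := by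
  unfold en act; split_ifs <;> simp [T.p_smul, T.q_smul]

lemma st_not (A : W × Bool) : ¬ T.inn (T.st A) A := by
  obtain ⟨a, e⟩ := A
  cases e <;> simp [inn, st, T.p_not, T.q_mem]

lemma en_inn (A : W × Bool) : T.inn (T.en A) A := by
  obtain ⟨a, e⟩ := A
  cases e <;> simp [inn, en, T.p_not, T.q_mem]

lemma st_en (A B : W × Bool) (h : B.1 ≠ A.1) : T.inn (T.st A) B ↔ T.inn (T.en A) B := by
  obtain ⟨a, e⟩ := A
  have := T.pq a B.1 h
  cases e <;> simp [inn, st, en, this]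

lemma eq_or_opp (A B : W × Bool) (h : A.1 = B.1) : A = B ∨ A = opp B := by
  obtain ⟨a, e⟩ := A
  obtain ⟨b, f⟩ := B
  simp only at h
  subst h
  cases e <;> cases f <;> simp [opp]

lemma nestedH (A B : W × Bool) (h : A.1 ≠ B.1) : (∀ x, T.inn x A → T.inn x B) ∨
    (∀ x, T.inn x B → T.inn x A) ∨ (∀ x, ¬ (T.inn x A ∧ T.inn x B)) ∨
    (∀ x, T.inn x A ∨ T.inn x B) := by
  obtain ⟨a, e⟩ := A
  obtain ⟨b, f⟩ := B
  have := T.nested a b h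
  cases e <;> cases f <;> simp only [inn, iff_true, Bool.false_eq_true, iff_false] <;>
  · rcases this with h | h | h | h
    · grind
    · grind
    · grind
    · grind

lemma eq_of_sub {A B : W × Bool} (h1 : ∀ x, T.inn x A → T.inn x B) (h2 : ∀ x, T.inn x B → T.inn x A) :
    A = B := by
  by_cases h : A.1 = B.1
  · rcases eq_or_opp A B h with h | h
    · exact h
    · exfalso
      have := h2 _ (T.en_inn B)
      rw [h, T.inn_opp] at this
      exact this (T.en_inn B)
  · exfalso
    have a1 := T.st_en A B (Ne.symm h)
    exact T.st_not A (h2 _ (a1.2 (h1 _ (T.en_inn A))))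

lemma simO_refl (O : Set W) (x : V) : T.simO O x x := fun _ _ => Iff.rfl
variable {T} in
lemma simO.symm {O : Set W} {x y : V} (h : T.simO O x y) : T.simO O y x := fun b hb => (h b hb).symm
variable {T} in
lemma simO.trans {O : Set W} {x y w : V} (h : T.simO O x y) (h' : T.simO O y w) : T.simO O x w :=
  fun b hb => (h b hb).trans (h' b hb)
variable {T} in
lemma simO.inn_iff {O : Set W} {x y : V} (h : T.simO O x y) {A : W × Bool} (hA : A.1 ∈ O) :
    T.inn x A ↔ T.inn y A := by
  simp [inn, h A.1 hA]
variable {T} in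
lemma simO.smul {O : Set W} (hO : ∀ (g : G) a, a ∈ O → g • a ∈ O) {x y : V} (h : T.simO O x y) (g : G) :
    T.simO O (g • x) (g • y) := by
  intro b hb
  rw [T.mem_smul', T.mem_smul']
  exact h _ (hO _ _ hb)

/-- maximal O-halfspaces among those missing v, containing w -/
def IsMax (O : Set W) (v w : V) (A : W × Bool) : Prop :=
  A.1 ∈ O ∧ ¬ T.inn v A ∧ T.inn w A ∧ ∀ B : W × Bool, B.1 ∈ O → ¬ T.inn v B →
    (∀ x, T.inn x A → T.inn x B) → B = A

lemma exists_isMax {O : Set W} {v w : V} (h : ¬ T.simO O v w) : ∃ A, T.IsMax O v w A := by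
  let s : Set (W × Bool) := {A | A.1 ∈ O ∧ ¬ T.inn v A ∧ T.inn w A}
  have hs : s.Finite := by
    apply ((T.fin v w).prod (Set.finite_univ (α := Bool))).subset
    rintro ⟨a, e⟩ ⟨-, h1, h2⟩
    simp only [inn] at h1 h2
    refine ⟨?_, trivial⟩
    change ¬ (_ ↔ _)
    simp only
    tauto
  have hne : s.Nonempty := by
    simp only [simO, not_forall] at h
    obtain ⟨b, hb, h⟩ := h
    by_cases hw : T.mem w b
    · refine ⟨(b, true), hb, ?_, ?_⟩ <;> simp only [inn] <;> tauto
    · refine ⟨(b, false), hb, ?_, ?_⟩ <;> simp only [inn, Bool.false_eq_true] <;> tauto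
  obtain ⟨A, hA, hmax⟩ := hs.exists_maximalFor (fun A => {x | T.inn x A}) _ hne
  refine ⟨A, hA.1, hA.2.1, hA.2.2, fun B hB hv hAB => ?_⟩
  apply T.eq_of_sub _ hAB
  exact hmax (show B ∈ s from ⟨hB, hv, hAB _ hA.2.2⟩) hAB

variable {T} in
lemma IsMax.st_sim {O : Set W} {v w : V} {A : W × Bool} (h : T.IsMax O v w A) : T.simO O (T.st A) v := by
  obtain ⟨h1, h2, h3, h4⟩ := h
  by_contra hne
  simp only [simO, not_forall] at hne
  obtain ⟨b, hb, hne⟩ := hne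
  obtain ⟨B, hB, hB1, hB2⟩ : ∃ B : W × Bool, B.1 = b ∧ ¬ T.inn v B ∧ T.inn (T.st A) B := by
    by_cases hw : T.mem v b
    · refine ⟨(b, false), rfl, ?_, ?_⟩ <;> simp only [inn, Bool.false_eq_true] <;> tauto
    · refine ⟨(b, true), rfl, ?_, ?_⟩ <;> simp only [inn] <;> tauto
  by_cases hAB : B.1 = A.1
  · rcases eq_or_opp B A hAB with h | h
    · rw [h] at hB2; exact T.st_not A hB2
    · rw [h, T.inn_opp] at hB1; tauto
  · have a1 := (T.st_en A B hAB).1 hB2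
    have a2 := T.st_not A
    have a3 := T.en_inn A
    have : ∀ x, T.inn x A → T.inn x B := by
      rcases T.nestedH A B (Ne.symm hAB) with h | h | h | h
      · exact h
      · exact absurd (h _ hB2) a2
      · exact absurd ⟨a3, a1⟩ (h _)
      · have := h v; tauto
    exact hAB (congrArg Prod.fst (h4 B (hB ▸ hb) hB1 this))

lemma IsMax_unique {O : Set W} {v w : V} {A B : W × Bool} (hA : T.IsMax O v w A) (hB : T.IsMax O v w B) :
    A = B := by
  obtain ⟨h1, h2, h3, h4⟩ := hA
  obtain ⟨k1, k2, k3, k4⟩ := hB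
  by_cases hAB : A.1 = B.1
  · rcases eq_or_opp A B hAB with h | h
    · exact h
    · rw [h, T.inn_opp] at h3; tauto
  rcases T.nestedH A B hAB with h | h | h | h
  · exact (h4 B k1 k2 h).symm
  · exact k4 A h1 h2 h
  · exact absurd ⟨h3, k3⟩ (h _)
  · have := h v; tauto

lemma eta_of_sim {O : Set W} {X : Type*} [Group X] {z : W → X} {η : V → X} (hη : ∀ a, η (T.q a) = η (T.p a) * z a)
    (hz : ∀ a, a ∉ O → z a = 1) {v w : V} (h : T.simO O v w) : η v = η w := by
  apply T.const_of η v w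
  intro a ha
  have : a ∉ O := fun hO => ha (h a hO)
  rw [hη, hz a this, mul_one]

lemma eta_en {z : W → G} {η : V → G} (hη : ∀ a, η (T.q a) = η (T.p a) * z a) (A : W × Bool) :
    η (T.en A) = η (T.st A) * zz z A := by
  obtain ⟨a, e⟩ := A
  cases e <;> simp [en, st, zz, hη]

/-- the injectivity criterion -/
lemma twist_injective {O : Set W} (hO : ∀ (g : G) a, a ∈ O → g • a ∈ O) {z : W → G} (hz1 : ∀ a, a ∉ O → z a = 1)
    {ψ : G →* G} {η : V → G} (hη : ∀ a, η (T.q a) = η (T.p a) * z a)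
    (hψ : ∀ g v, ψ g = η (g • v) * g * (η v)⁻¹) (v0 : V)
    (F : W × Bool → W × Bool) (hF : ∀ A : W × Bool, A.1 ∈ O → T.IsMax O (T.st A) (zz z A • T.en A) (F A))
    (hinj : ∀ A B : W × Bool, A.1 ∈ O → B.1 ∈ O → A ≠ B → T.simO O (T.st A) (T.st B) → F A ≠ F B) :
    Function.Injective ψ := by
  have claim : ∀ (n : ℕ) (A : W × Bool) (w : V), A.1 ∈ O → (T.sepw (T.st A) w ∩ O).ncard = n → T.inn w A →
      T.inn ((η (T.st A))⁻¹ • η w • w) (F A) := by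
    intro n
    induction n using Nat.strong_induction_on with
    | _ n ih =>
    intro A w hA hn hw
    obtain ⟨f1, f2, f3, f4⟩ := hF A hA
    by_cases hs : T.simO O (T.en A) w
    · rw [← T.eta_of_sim hη hz1 hs, T.eta_en hη, smul_smul, inv_mul_cancel_left]
      exact ((hs.smul hO (zz z A)).inn_iff f1).1 f3
    obtain ⟨B, hB⟩ := T.exists_isMax hs
    have hsB := hB.st_sim
    obtain ⟨b1, b2, b3, b4⟩ := hB
    have hoA : (opp A).1 ∈ O := hA
    have hlt : (T.sepw (T.st B) w ∩ O).ncard < n := by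
      rw [← hn]
      apply Set.ncard_lt_ncard _ ((T.fin _ _).subset Set.inter_subset_left)
      have hAA : A.1 ∈ T.sepw (T.st A) w ∩ O := by
        refine ⟨?_, hA⟩
        have := T.st_not A
        change ¬ (_ ↔ _)
        simp only [inn] at this hw
        tauto
      constructor
      · rintro c ⟨hc, hcO⟩
        refine ⟨?_, hcO⟩
        have hc' : ¬ (T.mem (T.st B) c ↔ T.mem w c) := hc
        change ¬ (_ ↔ _)
        rw [hsB c hcO] at hc'
        by_cases hcA : c = A.1
        · subst hcA; exact hAA.1
        · have := T.st_en A (c, true) hcA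
          simp only [inn, iff_true] at this
          rw [this]; exact hc'
      · intro hsub
        have h1 := (hsub hAA).1
        have h2 : ¬ (T.mem (T.st B) A.1 ↔ T.mem w A.1) := h1
        rw [hsB _ hA] at h2
        have := T.en_inn A
        simp only [inn] at this hw
        tauto
    have hw2 := ih _ hlt B w b1 rfl b3
    have hη2 : η (T.st B) = η (T.st A) * zz z A := by
      rw [T.eta_of_sim hη hz1 hsB, T.eta_en hη]
    set w2 := (η (T.st B))⁻¹ • η w • w with hw2def
    have hw1 : (η (T.st A))⁻¹ • η w • w = zz z A • w2 := by
      rw [hw2def, hη2]; simp only [smul_smul]; congr 1; group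
    rw [hw1]
    have hBne : opp A ≠ B := by
      rintro rfl
      rw [T.inn_opp] at b3; exact b3 hw
    have hsim' : T.simO O (T.st (opp A)) (T.st B) := by rw [T.st_opp]; exact hsB.symm
    have hFne := hinj _ _ hoA b1 hBne hsim'
    obtain ⟨e1, e2, e3, e4⟩ := hF _ hoA
    obtain ⟨g1, g2, g3, g4⟩ := hF _ b1
    have hdis : ¬ T.inn w2 (F (opp A)) := by
      by_cases hAB : (F (opp A)).1 = (F B).1
      · rcases eq_or_opp _ _ hAB with h | h
        · exact absurd h hFne
        · rw [h, T.inn_opp]; exact fun h => h hw2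
      rcases T.nestedH _ _ hAB with h | h | h | h
      · exact absurd (e4 _ g1 (by rw [hsim'.inn_iff g1]; exact g2) h).symm hFne
      · exact absurd (g4 _ e1 (by rw [← hsim'.inn_iff e1]; exact e2) h) hFne
      · exact fun h' => h w2 ⟨h', hw2⟩
      · exfalso
        rcases h (T.st B) with h | h
        · rw [← hsim'.inn_iff e1] at h; exact e2 h
        · exact g2 h
    -- the complement of the translate
    let E := act (zz z A) (opp (F (opp A)))
    have hE1 : E.1 ∈ O := hO _ _ e1
    have hE2 : T.inn (zz z A • w2) E := by rw [T.inn_act, T.inn_opp]; exact hdis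
    have hE3 : T.inn (zz z A • T.en A) E := by rw [T.inn_act, T.inn_opp, ← T.st_opp]; exact e2
    have hE4 : ¬ T.inn (T.st A) E := by
      rw [T.inn_act', T.inn_opp, ← T.en_opp, ← zz_opp]; exact fun h => h e3
    have hEF : ∀ x, T.inn x E → T.inn x (F A) := by
      by_cases hAB : E.1 = (F A).1
      · rcases eq_or_opp _ _ hAB with h | h
        · rw [h]; exact fun x hx => hx
        · rw [h, T.inn_opp] at hE3; exact absurd f3 hE3
      rcases T.nestedH _ _ hAB with h | h | h | h
      · exact h
      · rw [f4 E hE1 hE4 h]; exact fun x hx => hx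
      · exact absurd ⟨hE3, f3⟩ (h _)
      · rcases h (T.st A) with h | h
        · exact absurd h hE4
        · exact absurd h f2
    exact hEF _ hE2
  rw [injective_iff_map_eq_one]
  intro g hg
  by_cases hs : T.simO O v0 (g • v0)
  · have h1 := hψ g v0
    rw [hg, T.eta_of_sim hη hz1 hs] at h1
    have := mul_eq_one_iff_eq_inv.1 h1.symm
    simpa using this
  · exfalso
    obtain ⟨A, hA⟩ := T.exists_isMax hs
    have hsA := hA.st_sim
    obtain ⟨a1, a2, a3, a4⟩ := hA
    have h1 := claim _ A (g • v0) a1 rfl a3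
    obtain ⟨f1, f2, f3, f4⟩ := hF A a1
    rw [T.eta_of_sim hη hz1 hsA] at h1
    have h2 : (η v0)⁻¹ • η (g • v0) • g • v0 = v0 := by
      have h3 := hψ g v0
      rw [hg] at h3
      have h4 : η (g • v0) * g = η v0 := by rw [eq_comm, mul_inv_eq_one] at h3; exact h3
      rw [smul_smul _ _ v0, h4, inv_smul_smul]
    rw [h2, ← hsA.inn_iff f1] at h1
    exact f2 h1

end GTree

end

section
namespace GTree
variable {G V W : Type*} [Group G] [MulAction G V] [MulAction G W] (T : GTree G V W)

/-- the bad configuration -/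
def Bad (O : Set W) : Prop := ∃ a ∈ O, ∃ n : G,
  (∀ k, k • a = a ↔ (n * k * n⁻¹) • a = a) ∧ T.simO O (n • T.p a) (T.q a)

lemma IsMax_act {O : Set W} (hO : ∀ (g : G) a, a ∈ O → g • a ∈ O) (g : G) {v w : V} {A : W × Bool}
    (h : T.IsMax O v w A) : T.IsMax O (g • v) (g • w) (act g A) := by
  obtain ⟨h1, h2, h3, h4⟩ := h
  refine ⟨hO _ _ h1, by rwa [T.inn_act], by rwa [T.inn_act], fun B hB hv hAB => ?_⟩
  have := h4 (act g⁻¹ B) (hO _ _ hB) (by rw [T.inn_act']; simpa using hv) (by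
    intro x hx
    rw [T.inn_act']
    apply hAB
    rw [T.inn_act']
    simpa using hx)
  rw [← this]
  simp [act]

/-- a translate of a wall with smaller stabilizer has the same stabilizer -/
lemma stab_eq_of_le {a b : W} (hfin : (MulAction.stabilizer G a : Set G).Finite) (hab : b ∈ MulAction.orbit G a)
    (hle : ∀ g : G, g • a = a → g • b = b) : ∀ g : G, g • b = b → g • a = a := by
  obtain ⟨g, rfl⟩ := hab
  simp only at *
  -- Stab(b) = g Stab(a) g⁻¹
  let s : Set G := MulAction.stabilizer G a
  let t : Set G := (fun x => g * x * g⁻¹) '' s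
  have ht : t.ncard = s.ncard := Set.ncard_image_of_injective _ (by intro x y h; simpa using h)
  have hst : s ⊆ t := by
    intro x hx
    have := hle x hx
    refine ⟨g⁻¹ * x * g, ?_, by group⟩
    change (g⁻¹ * x * g) • a = a
    rw [mul_smul, mul_smul, this, inv_smul_smul]
  have heq : s = t := Set.eq_of_subset_of_ncard_le hst ht.le (hfin.image _)
  intro x hx
  have : x ∈ t := by
    refine ⟨g⁻¹ * x * g, ?_, by group⟩
    change (g⁻¹ * x * g) • a = a
    rw [mul_smul, mul_smul, hx, inv_smul_smul]
  rw [← heq] at this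
  exact this

lemma notBad_injective (hfin : ∀ a : W, (MulAction.stabilizer G a : Set G).Finite)
    {a0 : W} {z : W → G} (hz : ∀ (g : G) a, z (g • a) = g * z a * g⁻¹)
    (hz1 : ∀ a, a ∉ MulAction.orbit G a0 → z a = 1)
    {ψ : G →* G} {η : V → G} (hη : ∀ a, η (T.q a) = η (T.p a) * z a)
    (hψ : ∀ g v, ψ g = η (g • v) * g * (η v)⁻¹) (v0 : V)
    (hbad : ¬ T.Bad (MulAction.orbit G a0)) :
    Function.Injective ψ := by
  set O := MulAction.orbit G a0 with hOdef
  have hO : ∀ (g : G) a, a ∈ O → g • a ∈ O := by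
    rintro g a ⟨h, rfl⟩
    exact ⟨g * h, mul_smul _ _ _⟩
  have hOO : ∀ a b, a ∈ O → b ∈ O → ∃ g : G, b = g • a := by
    rintro a b ⟨h, rfl⟩ ⟨k, rfl⟩
    refine ⟨k * h⁻¹, ?_⟩
    simp [mul_smul]
  have hcent : ∀ a (k : G), k • a = a → k * z a * k⁻¹ = z a := by
    intro a k hk
    rw [← hz, hk]
  have hzzc : ∀ (A : W × Bool) (k : G), k • A.1 = A.1 → k * zz z A * k⁻¹ = zz z A := by
    intro A k hk
    have := hcent A.1 k hk
    unfold zz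
    split_ifs
    · exact this
    · nth_rewrite 2 [← this]; group
  have hzza : ∀ (A : W × Bool) (k : G), zz z (act k A) = k * zz z A * k⁻¹ := by
    intro A k
    unfold zz act
    split_ifs
    · exact hz _ _
    · rw [hz]; group
  have hnd : ∀ A : W × Bool, A.1 ∈ O → ¬ T.simO O (T.st A) (zz z A • T.en A) := by
    intro A hA hs
    apply hbad
    have key : ∀ n, n = z A.1 → ∀ k : G, k • A.1 = A.1 ↔ (n * k * n⁻¹) • A.1 = A.1 := by
      rintro n rfl k
      constructor
      · intro hk
        have h1 := hcent _ _ hk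
        have : z A.1 * k * (z A.1)⁻¹ = k := by
          nth_rewrite 1 [← h1]; group
        rw [this, hk]
      · intro hk
        have h1 := hcent _ _ hk
        have : z A.1 * k * (z A.1)⁻¹ = k := by
          have h3 : z A.1 * (k * z A.1 * k⁻¹) * (z A.1)⁻¹ = z A.1 * z A.1 * (z A.1)⁻¹ := by
            rw [mul_inv_cancel_right]
            nth_rewrite 4 [← h1]; group
          have h4 := mul_left_cancel (mul_right_cancel h3)
          have h5 : k * z A.1 = z A.1 * k := by
            rw [mul_inv_eq_iff_eq_mul] at h4; exact h4
          rw [← h5]; group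
        rw [this] at hk
        exact hk
    obtain ⟨a, e⟩ := A
    simp only at key
    cases e
    · simp only [st, en, zz] at hs
      refine ⟨a, hA, (z a)⁻¹, ?_, hs.symm⟩
      intro k
      have := key _ rfl ((z a)⁻¹ * k * (z a)⁻¹⁻¹)
      rw [this]
      have : z a * ((z a)⁻¹ * k * (z a)⁻¹⁻¹) * (z a)⁻¹ = k := by group
      rw [this]
    · simp only [st, en, zz] at hs
      refine ⟨a, hA, (z a)⁻¹, ?_, ?_⟩
      · intro k
        have := key _ rfl ((z a)⁻¹ * k * (z a)⁻¹⁻¹)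
        rw [this]
        have : z a * ((z a)⁻¹ * k * (z a)⁻¹⁻¹) * (z a)⁻¹ = k := by group
        rw [this]
      · have := hs.smul hO (z a)⁻¹
        simpa using this
  have hex : ∀ A : W × Bool, ∃ B, A.1 ∈ O → T.IsMax O (T.st A) (zz z A • T.en A) B := by
    intro A
    by_cases hA : A.1 ∈ O
    · obtain ⟨B, hB⟩ := T.exists_isMax (hnd A hA)
      exact ⟨B, fun _ => hB⟩
    · exact ⟨A, fun h => absurd h hA⟩
  choose F hF using hex
  apply T.twist_injective hO hz1 hη hψ v0 F hF
  have hFact : ∀ (g : G) A, A.1 ∈ O → F (act g A) = act g (F A) := by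
    intro g A hA
    have h1 := hF (act g A) (hO _ _ hA)
    have h2 := T.IsMax_act hO g (hF A hA)
    rw [T.st_act, T.en_act, hzza] at h1
    apply T.IsMax_unique h1
    convert h2 using 1
    simp [smul_smul]
  have hst1 : ∀ (A : W × Bool), A.1 ∈ O → ∀ k : G, k • A.1 = A.1 → k • (F A).1 = (F A).1 := by
    intro A hA k hk
    have h1 : act k A = A := by unfold act; rw [hk]
    have h2 := hFact k A hA
    rw [h1] at h2
    exact (congrArg Prod.fst h2).symm
  have hst : ∀ (A : W × Bool), A.1 ∈ O → ∀ k : G, k • A.1 = A.1 ↔ k • (F A).1 = (F A).1 := by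
    intro A hA k
    refine ⟨hst1 A hA k, ?_⟩
    apply stab_eq_of_le (hfin A.1) _ (hst1 A hA)
    obtain ⟨g, hg⟩ := hOO _ _ hA (hF A hA).1
    exact ⟨g, hg.symm⟩
  intro A B hA hB hne hs hFF
  have hstAB : ∀ k : G, k • A.1 = A.1 ↔ k • B.1 = B.1 := by
    intro k; rw [hst A hA, hst B hB, hFF]
  obtain ⟨g, hg⟩ := hOO _ _ hA hB
  have hnorm : ∀ k : G, k • A.1 = A.1 ↔ (g⁻¹ * k * g⁻¹⁻¹) • A.1 = A.1 := by
    intro k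
    rw [hstAB, hg, inv_inv, mul_smul, mul_smul, inv_smul_eq_iff]
  by_cases hsign : A.2 = B.2
  · have hBA : B = act g A := by
      ext <;> simp [act, hg, hsign]
    have h1 := hFact g A hA
    rw [← hBA, ← hFF] at h1
    have h2 : g • A.1 = A.1 := (hst A hA g).2 (congrArg Prod.fst h1).symm
    apply hne
    rw [hBA]; unfold act; rw [h2]
  · apply hbad
    have hBA : B = act g (opp A) := by
      ext
      · simp [act, opp, hg]
      · have : B.2 = !A.2 := by
          revert hsign; cases A.2 <;> cases B.2 <;> simp
        simp [act, opp, this]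
    rw [hBA, T.st_act, T.st_opp] at hs
    obtain ⟨a, e⟩ := A
    cases e
    · simp only [st, en] at hs
      refine ⟨a, hA, g, ?_, ?_⟩
      · intro k
        have := hnorm (g * k * g⁻¹)
        rw [this]
        have : (g⁻¹ * (g * k * g⁻¹) * g⁻¹⁻¹) = k := by group
        rw [this]
      · exact hs.symm
    · simp only [st, en] at hs
      refine ⟨a, hA, g⁻¹, hnorm, ?_⟩
      have := hs.smul hO g⁻¹
      simpa using this


lemma bad_absurd [Nonempty V] (hco : ∀ φ : G →* G, Function.Injective φ → Function.Surjective φ)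
    (hfin : ∀ a : W, (MulAction.stabilizer G a : Set G).Finite)
    {a0 : W} (hbad : T.Bad (MulAction.orbit G a0)) : False := by
  classical
  obtain ⟨a, ha, n, hn, hs⟩ := hbad
  have hOa : MulAction.orbit G a0 = MulAction.orbit G a := (MulAction.orbit_eq_iff.2 ha).symm
  rw [hOa] at hs
  clear ha hOa
  set O := MulAction.orbit G a with hOdef
  have haO : a ∈ O := MulAction.mem_orbit_self a
  have hO : ∀ (g : G) a, a ∈ O → g • a ∈ O := by
    rintro g a ⟨h, rfl⟩
    exact ⟨g * h, mul_smul _ _ _⟩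
  have hO' : ∀ (g : G) a, g • a ∈ O → a ∈ O := by
    intro g a h
    have := hO g⁻¹ _ h
    rwa [inv_smul_smul] at this
  -- a power of n centralizing the stabilizer
  obtain ⟨k, hk0, hk⟩ : ∃ k : ℕ, 0 < k ∧ ∀ x : G, x • a = a → n ^ k * x * (n ^ k)⁻¹ = x := by
    let K := MulAction.stabilizer G a
    have : Finite K := (hfin a).to_subtype
    have hnK : n ∈ Subgroup.normalizer (K : Set G) := by
      rw [Subgroup.mem_normalizer_iff]
      exact hn
    let f : MulAut K := K.normalizerMonoidHom ⟨n, hnK⟩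
    have hpow : ∀ j : ℕ, ∀ x : K, (((f ^ j) x : K) : G) = n ^ j * x * (n ^ j)⁻¹ := by
      intro j x
      rw [← map_pow]
      rfl
    refine ⟨orderOf f, orderOf_pos f, fun x hx => ?_⟩
    have := hpow (orderOf f) ⟨x, hx⟩
    rw [pow_orderOf_eq_one] at this
    simpa using this.symm
  have hsel : ∀ b, ∃ g : G, b ∈ O → b = g • a := by
    intro b
    by_cases hb : b ∈ O
    · obtain ⟨g, hg⟩ := hb
      exact ⟨g, fun _ => hg.symm⟩
    · exact ⟨1, fun h => absurd h hb⟩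
  choose r hr using hsel
  let z : W → G := fun b => if b ∈ O then r b * n ^ k * (r b)⁻¹ else 1
  have hzO : ∀ g : G, z (g • a) = g * n ^ k * g⁻¹ := by
    intro g
    have h1 : g • a ∈ O := hO _ _ haO
    have h2 := hr _ h1
    simp only [z, if_pos h1]
    have h3 := hk (g⁻¹ * r (g • a)) (by rw [mul_smul, ← h2, inv_smul_smul])
    set s := r (g • a)
    have h4 : n ^ k * (g⁻¹ * s) = (g⁻¹ * s) * n ^ k := by
      rw [mul_inv_eq_iff_eq_mul] at h3; exact h3
    have : s * n ^ k = g * (g⁻¹ * s * n ^ k) := by group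
    rw [this, ← h4]; group
  have hz1 : ∀ b, b ∉ O → z b = 1 := fun b hb => if_neg hb
  have hz : ∀ (g : G) b, z (g • b) = g * z b * g⁻¹ := by
    intro g b
    by_cases hb : b ∈ O
    · rw [hr b hb, smul_smul, hzO, hzO]; group
    · rw [hz1 b hb, hz1]
      · group
      · exact fun h => hb (hO' _ _ h)
  obtain ⟨ψ, η, hη, hψ⟩ := T.exists_twist z hz
  obtain ⟨v0⟩ := ‹Nonempty V›
  have hna : n • a ≠ a := by
    intro h
    rw [← T.p_smul, h] at hs
    have := hs a haO
    exact T.p_not a (this.2 (T.q_mem a))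
  have hsub1 : ∀ x, T.mem x (n • a) → T.mem x a := by
    have a1 : T.mem (n • T.p a) a := (hs a haO).2 (T.q_mem a)
    have a2 : ¬ T.mem (n • T.p a) (n • a) := by rw [T.mem_smul]; exact T.p_not a
    have a3 : T.mem (n • T.q a) (n • a) := by rw [T.mem_smul]; exact T.q_mem a
    have a4 : T.mem (n • T.q a) a := by
      rw [← T.q_smul, ← T.pq _ _ (Ne.symm hna), T.p_smul]; exact a1
    have a5 : ¬ T.mem (T.q a) (n • a) := by rw [← hs _ (hO _ _ haO)]; exact a2
    have a6 : ¬ T.mem (T.p a) (n • a) := by rw [T.pq _ _ hna]; exact a5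
    rcases T.nested a (n • a) (Ne.symm hna) with h | h | h | h
    · exact absurd (h _ a1) a2
    · exact h
    · exact absurd ⟨a4, a3⟩ (h _)
    · rcases h (T.p a) with h | h
      · exact absurd h (T.p_not a)
      · exact absurd h a6
  have hsub : ∀ j : ℕ, ∀ x, T.mem x (n ^ j • a) → T.mem x a := by
    intro j
    induction j with
    | zero => intro x hx; simpa using hx
    | succ j ih =>
      intro x hx
      apply ih
      rw [← T.mem_smul (n ^ j)⁻¹, inv_smul_smul]
      apply hsub1
      rw [← T.mem_smul (n ^ j)⁻¹, pow_succ, mul_smul, inv_smul_smul] at hx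
      exact hx
  have hinj : Function.Injective ψ := by
    apply T.twist_injective hO hz1 hη hψ v0 id
    · intro A hA
      refine ⟨hA, T.st_not A, ?_, ?_⟩
      · obtain ⟨b, e⟩ := A
        obtain ⟨g, rfl⟩ := hA
        cases e
        · simp only [inn, zz, en, id, hzO, T.p_smul]
          simp only [Bool.false_eq_true, if_false, iff_false]
          rw [smul_smul]
          have : (g * n ^ k * g⁻¹)⁻¹ * g = g * (n ^ k)⁻¹ := by group
          rw [this, mul_smul, T.mem_smul]
          intro h
          apply T.p_not a
          apply hsub k
          rwa [← T.mem_smul (n ^ k)⁻¹, inv_smul_smul]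
        · simp only [inn, zz, en, id, hzO, T.q_smul]
          simp only [if_true, iff_true]
          rw [smul_smul]
          have : (g * n ^ k * g⁻¹) * g = g * (n ^ k) := by group
          rw [this, mul_smul, T.mem_smul]
          apply hsub k
          rw [T.mem_smul]; exact T.q_mem a
      · intro B hB hst hAB
        by_cases h : B.1 = A.1
        · rcases eq_or_opp B A h with h | h
          · exact h
          · rw [h, T.inn_opp] at hst; exact absurd (T.st_not A) hst
        · rw [T.st_en A B h] at hst
          exact absurd (hAB _ (T.en_inn A)) hst
    · intro A B _ _ h _; exact h
  have hsurj := hco ψ hinj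
  -- the signed count
  let ξ : W → Multiplicative ℤ := fun b => if b ∈ O then Multiplicative.ofAdd 1 else 1
  have : Nonempty V := ⟨v0⟩
  obtain ⟨θ, hθ⟩ := T.integrate ξ
  have hξ : ∀ (g : G) b, ξ (g • b) = ξ b := by
    intro g b
    simp only [ξ]
    by_cases hb : b ∈ O
    · rw [if_pos hb, if_pos (hO _ _ hb)]
    · rw [if_neg hb, if_neg (fun h => hb (hO' _ _ h))]
  have hind : ∀ g : G, ∀ v w, θ (g • v) * (θ v)⁻¹ = θ (g • w) * (θ w)⁻¹ := by
    intro g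
    apply T.const_all (fun v => θ (g • v) * (θ v)⁻¹)
    intro b
    rw [← T.p_smul, ← T.q_smul, hθ, hθ, hξ]
    rw [mul_inv_rev, mul_assoc, mul_inv_cancel_left]
  let χ : G →* Multiplicative ℤ := ⟨⟨fun g => θ (g • v0) * (θ v0)⁻¹, by simp⟩, by
    intro g h
    change θ ((g * h) • v0) * (θ v0)⁻¹ = θ (g • v0) * (θ v0)⁻¹ * (θ (h • v0) * (θ v0)⁻¹)
    rw [hind g v0 (h • v0), mul_smul]
    group⟩
  have hχ : ∀ g v, χ g = θ (g • v) * (θ v)⁻¹ := fun g v => hind g v0 v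
  have hχn : χ n = Multiplicative.ofAdd 1 := by
    have hξ1 : ∀ b, b ∉ O → ξ b = 1 := fun b hb => if_neg hb
    rw [hχ n (T.p a), T.eta_of_sim hθ hξ1 hs, hθ, mul_comm, inv_mul_cancel_left]
    exact if_pos haO
  have hχz : ∀ b, χ (z b) = ξ b ^ k := by
    intro b
    by_cases hb : b ∈ O
    · rw [hr b hb, hzO, hξ]
      simp only [map_mul, map_pow, map_inv, hχn, ξ, if_pos haO]
      rw [mul_comm, inv_mul_cancel_left]
    · simp [hz1 b hb, ξ, if_neg hb]
  have hχη : ∀ v w, χ (η v) * (θ v ^ k)⁻¹ = χ (η w) * (θ w ^ k)⁻¹ := by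
    apply T.const_all (fun v => χ (η v) * (θ v ^ k)⁻¹)
    intro b
    rw [hη, hθ, map_mul, hχz, mul_pow, mul_inv_rev, mul_assoc, mul_inv_cancel_left]
  have hχψ : ∀ g, χ (ψ g) = χ g ^ (k + 1) := by
    intro g
    have h1 := hχη (g • v0) v0
    rw [hψ g v0, map_mul, map_mul, map_inv]
    have h2 : χ (η (g • v0)) = χ (η v0) * (θ v0 ^ k)⁻¹ * θ (g • v0) ^ k := by
      rw [← h1]; group
    have h3 : χ g ^ k = (θ v0 ^ k)⁻¹ * θ (g • v0) ^ k := by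
      rw [hχ g v0, mul_pow, inv_pow, mul_comm]
    rw [h2, mul_assoc (χ (η v0)), ← h3, pow_succ, mul_comm, mul_assoc, inv_mul_cancel_left]
  obtain ⟨g, hg⟩ := hsurj n
  have h1 := hχψ g
  rw [hg, hχn] at h1
  have h2 : (1 : ℤ) = (k + 1 : ℕ) • Multiplicative.toAdd (χ g) := by
    have := congrArg Multiplicative.toAdd h1
    simpa using this
  rw [nsmul_eq_mul] at h2
  have h3 := Int.isUnit_iff.1 (IsUnit.of_mul_eq_one _ h2.symm)
  push_cast at h3
  omega

/-- Core: a homomorphism which is conjugation on every vertex stabilizer is bijective. -/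
theorem core [Nonempty V] (hco : ∀ φ : G →* G, Function.Injective φ → Function.Surjective φ)
    (hfin : ∀ a : W, (MulAction.stabilizer G a : Set G).Finite)
    (horb : Finite (MulAction.orbitRel.Quotient G W)) (n : ℕ) :
    ∀ (φ : G →* G) (γ : V → G), (∀ g v, γ (g • v) = φ g * γ v * g⁻¹) →
    ({o : MulAction.orbitRel.Quotient G W | ∃ b : W, (Quotient.mk _ b : MulAction.orbitRel.Quotient G W) = o ∧
      γ (T.p b) ≠ γ (T.q b)}.ncard = n) →
    Function.Bijective φ := by
  classical
  induction n using Nat.strong_induction_on with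
  | _ n ih =>
  intro φ γ hγ hn
  by_cases hc : ∀ b, γ (T.p b) = γ (T.q b)
  · obtain ⟨v0⟩ := ‹Nonempty V›
    have h1 : ∀ g, φ g = γ v0 * g * (γ v0)⁻¹ := by
      intro g
      have h2 := hγ g v0
      rw [T.const_all γ hc (g • v0) v0] at h2
      nth_rewrite 1 [h2]; group
    constructor
    · intro g h hgh
      rw [h1, h1] at hgh
      exact mul_left_cancel (mul_right_cancel hgh)
    · intro g
      refine ⟨(γ v0)⁻¹ * g * γ v0, ?_⟩
      rw [h1]; group
  · push Not at hc
    obtain ⟨a, ha⟩ := hc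
    set O := MulAction.orbit G a with hOdef
    have hO : ∀ (g : G) b, g • b ∈ O ↔ b ∈ O := by
      intro g b
      constructor
      · rintro ⟨h, hh⟩
        exact ⟨g⁻¹ * h, by simp only at hh ⊢; rw [mul_smul, hh, inv_smul_smul]⟩
      · rintro ⟨h, rfl⟩
        exact ⟨g * h, mul_smul _ _ _⟩
    let z : W → G := fun b => if b ∈ O then (γ (T.p b))⁻¹ * γ (T.q b) else 1
    have hz1 : ∀ b, b ∉ O → z b = 1 := fun b hb => if_neg hb
    have hz : ∀ (g : G) b, z (g • b) = g * z b * g⁻¹ := by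
      intro g b
      by_cases hb : b ∈ O
      · simp only [z, if_pos hb, if_pos ((hO g b).2 hb), T.p_smul, T.q_smul, hγ]
        group
      · rw [hz1 b hb, hz1]
        · group
        · rwa [hO]
    obtain ⟨ψ, η, hη, hψ⟩ := T.exists_twist z hz
    have hinj : Function.Injective ψ := by
      obtain ⟨v0⟩ := ‹Nonempty V›
      apply T.notBad_injective hfin hz hz1 hη hψ v0
      have : Nonempty V := ⟨v0⟩
      intro hb
      exact T.bad_absurd hco hfin hb
    let e : G ≃* G := MulEquiv.ofBijective ψ ⟨hinj, hco ψ hinj⟩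
    have he : ∀ g, e.symm (ψ g) = g := fun g => e.symm_apply_apply g
    have hη2 : ∀ g v, η (g • v) = ψ g * η v * g⁻¹ := by
      intro g v; rw [hψ g v]; group
    let φ' : G →* G := e.symm.toMonoidHom.comp φ
    let γ' : V → G := fun v => e.symm (γ v * (η v)⁻¹)
    have hγ' : ∀ g v, γ' (g • v) = φ' g * γ' v * g⁻¹ := by
      intro g v
      change e.symm (γ (g • v) * (η (g • v))⁻¹) = e.symm (φ g) * e.symm (γ v * (η v)⁻¹) * g⁻¹
      rw [← he g⁻¹, ← map_mul, ← map_mul, hγ, hη2, map_inv]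
      congr 1
      group
    have hz' : ∀ b, γ' (T.p b) = γ' (T.q b) ↔ (b ∈ O ∨ γ (T.p b) = γ (T.q b)) := by
      intro b
      simp only [γ']
      rw [e.symm.injective.eq_iff, hη]
      by_cases hb : b ∈ O
      · simp only [hb, true_or, iff_true, z, if_true]
        group
      · simp [hz1 b hb, hb]
    have hbij : Function.Bijective φ' := by
      apply ih _ _ φ' γ' hγ' rfl
      rw [← hn]
      apply Set.ncard_lt_ncard _ (Set.toFinite _)
      constructor
      · rintro o ⟨b, hb, hne⟩
        refine ⟨b, hb, fun h => hne ((hz' b).2 (Or.inr h))⟩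
      · intro hsub
        obtain ⟨b, hb, hne⟩ := hsub (show (Quotient.mk _ a : MulAction.orbitRel.Quotient G W) ∈ _ from ⟨a, rfl, ha⟩)
        apply hne
        rw [hz']
        left
        exact MulAction.orbitRel_apply.1 (Quotient.exact hb)
    have : φ = e.toMonoidHom.comp φ' := by
      ext g; simp [φ']
    rw [this]
    exact e.bijective.comp hbij

/-- Core, in terms of stabilizers of vertices. -/
theorem core' (T : GTree G V W) [Nonempty V] (hco : ∀ φ : G →* G, Function.Injective φ → Function.Surjective φ)
    (hfin : ∀ a : W, (MulAction.stabilizer G a : Set G).Finite)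
    (horb : Finite (MulAction.orbitRel.Quotient G W)) (φ : G →* G)
    (hφ : ∀ v : V, ∃ g : G, ∀ x : G, x • v = v → φ x = g * x * g⁻¹) : Function.Bijective φ := by
  choose c hc using hφ
  let rep : V → V := fun v => (Quotient.mk _ v : MulAction.orbitRel.Quotient G V).out
  have hrep : ∀ v, ∃ h : G, v = h • rep v := by
    intro v
    have h1 : (Quotient.mk _ (rep v) : MulAction.orbitRel.Quotient G V) = Quotient.mk _ v := Quotient.out_eq _
    obtain ⟨h, hh⟩ := MulAction.orbitRel_apply.1 (Quotient.exact h1.symm)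
    exact ⟨h, hh.symm⟩
  have hrep2 : ∀ (g : G) v, rep (g • v) = rep v := by
    intro g v
    have : (Quotient.mk _ (g • v) : MulAction.orbitRel.Quotient G V) = Quotient.mk _ v :=
      Quotient.sound ⟨g, rfl⟩
    simp only [rep, this]
  choose t ht using hrep
  refine T.core hco hfin horb _ φ (fun v => φ (t v) * c (rep v) * (t v)⁻¹) ?_ rfl
  intro g v
  have h1 := ht (g • v)
  rw [hrep2] at h1 ⊢
  set s := t (g • v)
  set r := rep v
  have h2 : (s⁻¹ * (g * t v)) • r = r := by
    rw [mul_smul, mul_smul, ← ht v, h1, inv_smul_smul]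
  have h3 := hc r _ h2
  have h4 : φ g * φ (t v) = φ s * (c r * (s⁻¹ * (g * t v)) * (c r)⁻¹) := by
    rw [← h3]; simp
  have h5 : φ g * (φ (t v) * c r * (t v)⁻¹) * g⁻¹ = φ g * φ (t v) * c r * (t v)⁻¹ * g⁻¹ := by group
  rw [h5, h4]
  group

end GTree

end

section
open Pointwise

/-- A nested system of cuts of a group. -/
structure CutSys {G : Type*} [Group G] (N : Subgroup G) (E : Set (Set G)) : Prop where
  inv : ∀ (g : G) (A : Set G), A ∈ E → g • A ∈ E
  compl : ∀ A ∈ E, Aᶜ ∈ E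
  nested : ∀ A ∈ E, ∀ B ∈ E, A ⊆ B ∨ B ⊆ A ∨ A ⊆ Bᶜ ∨ Aᶜ ⊆ B
  finsep : ∀ x y : G, {A | A ∈ E ∧ x ∈ A ∧ y ∉ A}.Finite
  nonempty : ∀ A ∈ E, A.Nonempty
  finorb : ∃ R : Set (Set G), R.Finite ∧ R ⊆ E ∧ ∀ A ∈ E, ∃ g : G, ∃ B ∈ R, A = g • B
  finstab : ∀ A ∈ E, {g : G | g • A = A}.Finite
  detect : ∀ h ∈ N, h ≠ 1 → ∃ A ∈ E, (∀ᶠ n : ℕ in Filter.atTop, h ^ n ∈ A) ∧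
    (∀ᶠ n : ℕ in Filter.atTop, h⁻¹ ^ n ∉ A)

namespace CutSys
variable {G : Type*} [Group G] {N : Subgroup G} {E : Set (Set G)} (hE : CutSys N E)

/-- vertices -/
def IsVert (E : Set (Set G)) (U : Set (Set G)) : Prop :=
  U ⊆ E ∧ (∀ A ∈ U, ∀ B ∈ E, A ⊆ B → B ∈ U) ∧ (∀ A ∈ U, Aᶜ ∉ U) ∧
  (∀ A ∈ E, ∀ B ∈ E, A ∉ U → Aᶜ ∉ U → B ∉ U → Bᶜ ∉ U → B = A ∨ B = Aᶜ) ∧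
  {A | A ∈ U ∧ (1 : G) ∉ A}.Finite

lemma inv' (hE : CutSys N E) (g : G) (A : Set G) : g • A ∈ E ↔ A ∈ E :=
  ⟨fun h => by have := hE.inv g⁻¹ _ h; rwa [inv_smul_smul] at this, hE.inv g A⟩

lemma smul_compl (g : G) (A : Set G) : g • Aᶜ = (g • A)ᶜ := Set.smul_set_compl

lemma nonempty' (hE : CutSys N E) {A : Set G} (hA : A ∈ E) : ∃ y, y ∉ A :=
  hE.nonempty _ (hE.compl A hA)

lemma isVert_smul (hE : CutSys N E) (g : G) {U : Set (Set G)} (hU : IsVert E U) : IsVert E (g • U) := by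
  obtain ⟨h1, h2, h3, h4, h5⟩ := hU
  have hmem : ∀ A, A ∈ g • U ↔ g⁻¹ • A ∈ U := fun A => Set.mem_smul_set_iff_inv_smul_mem
  refine ⟨?_, ?_, ?_, ?_, ?_⟩
  · intro A hA
    rw [hmem] at hA
    exact (hE.inv' _ _).1 (h1 hA)
  · intro A hA B hB hAB
    rw [hmem] at hA ⊢
    exact h2 _ hA _ (hE.inv _ _ hB) (Set.smul_set_mono hAB)
  · intro A hA
    rw [hmem] at hA ⊢
    rw [smul_compl]; exact h3 _ hA
  · intro A hA B hB a1 a2 b1 b2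
    rw [hmem] at a1 a2 b1 b2
    rw [smul_compl] at a2 b2
    have := h4 _ (hE.inv g⁻¹ _ hA) _ (hE.inv g⁻¹ _ hB) a1 a2 b1 b2
    rw [← smul_compl] at this
    simpa using this
  · -- finiteness
    have : {A | A ∈ g • U ∧ (1 : G) ∉ A} ⊆ (fun A => g • A) '' ({A | A ∈ U ∧ (1 : G) ∉ A} ∪ {A | A ∈ E ∧ 1 ∈ A ∧ g⁻¹ ∉ A}) := by
      rintro A ⟨hA, h⟩
      rw [hmem] at hA
      refine ⟨g⁻¹ • A, ?_, by simp⟩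
      have hg : g⁻¹ ∉ g⁻¹ • A := by
        rw [Set.mem_smul_set_iff_inv_smul_mem]; simpa using h
      by_cases h1' : (1 : G) ∈ g⁻¹ • A
      · right
        exact ⟨h1 hA, h1', hg⟩
      · left
        exact ⟨hA, h1'⟩
    exact ((h5.union (hE.finsep _ _)).image _).subset this

/-- the vertex set as a G-set -/
def VV (hE : CutSys N E) : SubMulAction G (Set (Set G)) where
  carrier := {U | IsVert E U}
  smul_mem' := fun g _ hU => hE.isVert_smul g hU

/-- the wall set as a G-set -/
def WW (hE : CutSys N E) : SubMulAction G (Set G) where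
  carrier := E
  smul_mem' := fun g _ hA => hE.inv g _ hA

/-- the inner vertex of a wall -/
def qs (E : Set (Set G)) (A : Set G) : Set (Set G) := {B | B ∈ E ∧ (A ⊆ B ∨ (Aᶜ ⊆ B ∧ B ≠ Aᶜ))}

lemma qs_total (hE : CutSys N E) {A : Set G} (hA : A ∈ E) (B : Set G) (hB : B ∈ E) :
    B ∈ qs E A ∨ Bᶜ ∈ qs E A := by
  have hBc := hE.compl B hB
  rcases hE.nested A hA B hB with h | h | h | h
  · exact Or.inl ⟨hB, Or.inl h⟩
  · by_cases hBA : B = A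
    · subst hBA; exact Or.inl ⟨hB, Or.inl le_rfl⟩
    · exact Or.inr ⟨hBc, Or.inr ⟨Set.compl_subset_compl.2 h, fun h' => hBA (compl_injective h')⟩⟩
  · exact Or.inr ⟨hBc, Or.inl h⟩
  · by_cases hBA : B = Aᶜ
    · subst hBA; exact Or.inr ⟨hBc, Or.inl (by rw [_root_.compl_compl])⟩
    · exact Or.inl ⟨hB, Or.inr ⟨h, hBA⟩⟩

lemma isVert_qs (hE : CutSys N E) {A : Set G} (hA : A ∈ E) : IsVert E (qs E A) := by
  obtain ⟨x, hx⟩ := hE.nonempty A hA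
  obtain ⟨y, hy⟩ := hE.nonempty' hA
  refine ⟨fun B hB => hB.1, ?_, ?_, ?_, ?_⟩
  · rintro B ⟨hB, h | h⟩ C hC hBC
    · exact ⟨hC, Or.inl (h.trans hBC)⟩
    · refine ⟨hC, Or.inr ⟨h.1.trans hBC, ?_⟩⟩
      rintro rfl
      exact h.2 (subset_antisymm hBC h.1)
  · rintro B ⟨hB, h⟩ ⟨hB', h'⟩
    rcases h with h | h <;> rcases h' with h' | h'
    · exact h' hx (h hx)
    · have h1 : B ⊆ A := Set.compl_subset_compl.1 h'.1
      exact h'.2 (by rw [subset_antisymm h h1])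
    · have h1 : B ⊆ Aᶜ := Set.subset_compl_comm.1 h'
      exact h.2 (subset_antisymm h1 h.1)
    · exact h'.1 hy (h.1 hy)
  · intro B hB C hC b1 b2
    rcases hE.qs_total hA B hB with h | h
    · exact absurd h b1
    · exact absurd h b2
  · apply ((hE.finsep x 1).union (hE.finsep y 1)).subset
    rintro B ⟨⟨hB, h | h⟩, h1⟩
    · exact Or.inl ⟨hB, h hx, h1⟩
    · exact Or.inr ⟨hB, h.1 hy, h1⟩

lemma isVert_ps (hE : CutSys N E) {A : Set G} (hA : A ∈ E) : IsVert E (qs E A \ {A}) := by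
  obtain ⟨h1, h2, h3, h4, h5⟩ := hE.isVert_qs hA
  obtain ⟨x, hx⟩ := hE.nonempty A hA
  obtain ⟨y, hy⟩ := hE.nonempty' hA
  have hAc := hE.compl A hA
  refine ⟨fun B hB => h1 hB.1, ?_, ?_, ?_, ?_⟩
  · rintro B ⟨hB, hne⟩ C hC hBC
    refine ⟨h2 _ hB _ hC hBC, ?_⟩
    rintro rfl
    rcases hB.2 with h | h
    · exact hne (subset_antisymm hBC h)
    · exact hy (hBC (h.1 hy))
  · rintro B hB hB'
    exact h3 _ hB.1 hB'.1
  · have key : ∀ B ∈ E, B ∉ qs E A \ {A} → Bᶜ ∉ qs E A \ {A} → B = A ∨ B = Aᶜ := by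
      intro B hB b1 b2
      rcases hE.qs_total hA B hB with h | h
      · left; by_contra hne; exact b1 ⟨h, hne⟩
      · right
        by_contra hne
        apply b2
        refine ⟨h, ?_⟩
        intro h'
        apply hne
        rw [Set.mem_singleton_iff] at h'
        rw [← h', _root_.compl_compl]
    intro B hB C hC b1 b2 c1 c2
    rcases key B hB b1 b2 with rfl | rfl
    · exact key C hC c1 c2
    · rcases key C hC c1 c2 with rfl | rfl
      · right; simp
      · left; rfl
  · exact h5.subset (fun B hB => ⟨hB.1.1, hB.2⟩)

lemma vert_fin (hE : CutSys N E) {U : Set (Set G)} (hU : IsVert E U) : {A | A ∈ E ∧ ¬ (A ∈ U ↔ (1 : G) ∈ A)}.Finite := by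
  classical
  obtain ⟨h1, h2, h3, h4, h5⟩ := hU
  have hmiss : {A | A ∈ E ∧ A ∉ U ∧ Aᶜ ∉ U}.Finite := by
    by_cases hne : ∃ B, B ∈ E ∧ B ∉ U ∧ Bᶜ ∉ U
    · obtain ⟨B, b1, b2, b3⟩ := hne
      apply (Set.toFinite {B, Bᶜ}).subset
      rintro A ⟨a1, a2, a3⟩
      exact h4 B b1 A a1 b2 b3 a2 a3
    · apply Set.finite_empty.subset
      intro A hA
      exact absurd ⟨A, hA⟩ hne
  apply ((h5.union (h5.image (fun A : Set G => Aᶜ))).union hmiss).subset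
  rintro A ⟨hA, h⟩
  by_cases hAU : A ∈ U
  · exact Or.inl (Or.inl ⟨hAU, by tauto⟩)
  · by_cases hAc : Aᶜ ∈ U
    · refine Or.inl (Or.inr ⟨Aᶜ, ⟨hAc, ?_⟩, _root_.compl_compl A⟩)
      simp only [Set.mem_compl_iff, not_not]
      tauto
    · exact Or.inr ⟨hA, hAU, hAc⟩

/-- the tree -/
def tree (hE : CutSys N E) : GTree G hE.VV hE.WW where
  mem U A := A.1 ∈ U.1
  mem_smul g U A := by
    change g • A.1 ∈ g • U.1 ↔ _
    exact Set.smul_mem_smul_set_iff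
  p A := ⟨qs E A.1 \ {A.1}, hE.isVert_ps A.2⟩
  q A := ⟨qs E A.1, hE.isVert_qs A.2⟩
  p_not A h := h.2 rfl
  q_mem A := ⟨A.2, Or.inl le_rfl⟩
  pq A B hne := by
    have : B.1 ≠ A.1 := fun h => hne (Subtype.ext h)
    simp [this]
  nested A B hne := by
    have hne' : A.1 ≠ B.1 := fun h => hne (Subtype.ext h)
    obtain ⟨A, hA⟩ := A
    obtain ⟨B, hB⟩ := B
    by_cases hBA : B = Aᶜ
    · right; right; left
      rintro ⟨U, hU⟩ ⟨h1, h2⟩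
      simp only at h1 h2
      rw [hBA] at h2
      exact hU.2.2.1 _ h1 h2
    rcases hE.nested A hA B hB with h | h | h | h
    · left
      rintro ⟨U, hU⟩ h1
      exact hU.2.1 _ h1 _ hB h
    · right; left
      rintro ⟨U, hU⟩ h1
      exact hU.2.1 _ h1 _ hA h
    · right; right; left
      rintro ⟨U, hU⟩ ⟨h1, h2⟩
      exact hU.2.2.1 _ h2 (hU.2.1 _ h1 _ (hE.compl B hB) h)
    · right; right; right
      rintro ⟨U, hU⟩
      by_contra hcon
      push Not at hcon
      obtain ⟨a1, b1⟩ := hcon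
      have a2 : Aᶜ ∉ U := fun h' => b1 (hU.2.1 _ h' _ hB h)
      have b2 : Bᶜ ∉ U := fun h' => a1 (hU.2.1 _ h' _ hA (Set.compl_subset_comm.1 h))
      rcases hU.2.2.2.1 A hA B hB a1 a2 b1 b2 with h | h
      · exact hne' h.symm
      · exact hBA h
  fin U U' := by
    have := ((hE.vert_fin U.2).union (hE.vert_fin U'.2)).preimage (f := fun A : hE.WW => A.1)
      Subtype.val_injective.injOn
    apply this.subset
    intro A hA
    have hA' : ¬ (A.1 ∈ U.1 ↔ A.1 ∈ U'.1) := hA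
    by_cases h : A.1 ∈ U.1 ↔ (1 : G) ∈ A.1
    · refine Or.inr ⟨A.2, ?_⟩
      tauto
    · exact Or.inl ⟨A.2, h⟩
  ext U U' h := by
    apply Subtype.ext
    ext A
    constructor
    · intro hA
      exact (h ⟨A, U.2.1 hA⟩).1 hA
    · intro hA
      exact (h ⟨A, U'.2.1 hA⟩).2 hA

lemma vv_nonempty (hE : CutSys N E) : Nonempty hE.VV := by
  refine ⟨⟨{A | A ∈ E ∧ (1 : G) ∈ A}, fun A hA => hA.1, ?_, ?_, ?_, ?_⟩⟩
  · exact fun A hA B hB hAB => ⟨hB, hAB hA.2⟩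
  · exact fun A hA hA' => hA'.2 hA.2
  · intro A hA B hB a1 a2
    by_cases h : (1 : G) ∈ A
    · exact absurd ⟨hA, h⟩ a1
    · exact absurd ⟨hE.compl A hA, h⟩ a2
  · apply Set.finite_empty.subset
    rintro A ⟨⟨_, h⟩, h'⟩
    exact h' h

lemma ww_stab (hE : CutSys N E) (A : hE.WW) : (MulAction.stabilizer G A : Set G).Finite := by
  apply (hE.finstab A.1 A.2).subset
  intro g hg
  exact congrArg Subtype.val (show g • A = A from hg)

lemma ww_orb (hE : CutSys N E) : Finite (MulAction.orbitRel.Quotient G hE.WW) := by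
  obtain ⟨R, hR, hRE, h⟩ := hE.finorb
  have : Finite R := hR.to_subtype
  refine Finite.of_surjective (fun B : R => (Quotient.mk _ (⟨B.1, hRE B.2⟩ : hE.WW) : MulAction.orbitRel.Quotient G hE.WW)) ?_
  intro o
  induction o using Quotient.inductionOn with
  | _ A =>
  obtain ⟨g, B, hB, hAB⟩ := h A.1 A.2
  refine ⟨⟨B, hB⟩, ?_⟩
  apply Quotient.sound
  refine ⟨g⁻¹, ?_⟩
  apply Subtype.ext
  change g⁻¹ • A.1 = B
  rw [hAB, inv_smul_smul]

lemma not_periodic {h : G} {A : Set G} (h1 : ∀ᶠ n : ℕ in Filter.atTop, h ^ n ∈ A)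
    (h2 : ∀ᶠ n : ℕ in Filter.atTop, h⁻¹ ^ n ∉ A) (d : ℕ) (hd : 0 < d) (hA : h ^ d • A = A) : False := by
  have key : ∀ x, h ^ d * x ∈ A ↔ x ∈ A := by
    intro x
    nth_rewrite 1 [← hA]
    rw [← smul_eq_mul, Set.smul_mem_smul_set_iff]
  have k1 : ∀ m : ℕ, h ^ (d * m) ∈ A ↔ 1 ∈ A := by
    intro m
    induction m with
    | zero => simp
    | succ m ih => rw [mul_add, mul_one, add_comm, pow_add, key, ih]
  have k2 : ∀ m : ℕ, h⁻¹ ^ (d * m) ∈ A ↔ 1 ∈ A := by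
    intro m
    induction m with
    | zero => simp
    | succ m ih => rw [← ih, mul_add, mul_one, add_comm, pow_add, ← key]; simp
  rw [Filter.eventually_atTop] at h1 h2
  obtain ⟨n1, h1⟩ := h1
  obtain ⟨n2, h2⟩ := h2
  have a1 := (k1 n1).1 (h1 _ (Nat.le_mul_of_pos_left n1 hd))
  exact h2 _ (Nat.le_mul_of_pos_left n2 hd) ((k2 n2).2 a1)

lemma no_fix (hE : CutSys N E) {h : G} (hN : h ∈ N) (h1 : h ≠ 1) (U : hE.VV) (hU : h • U = U) : False := by
  obtain ⟨C, hC, t1, t2⟩ := hE.detect h hN h1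
  obtain ⟨U, hV⟩ := U
  have hU' : h • U = U := congrArg Subtype.val hU
  have hmem : ∀ A, A ∈ U ↔ h • A ∈ U := by
    intro A
    nth_rewrite 2 [← hU']
    rw [Set.smul_mem_smul_set_iff]
  have hmemn : ∀ (n : ℕ) A, A ∈ U ↔ h ^ n • A ∈ U := by
    intro n
    induction n with
    | zero => simp
    | succ n ih => intro A; rw [hmem A, pow_succ, mul_smul, ← ih]
  have hmemn' : ∀ (n : ℕ) A, A ∈ U ↔ h⁻¹ ^ n • A ∈ U := by
    intro n A
    rw [hmemn n (h⁻¹ ^ n • A)]; simp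
  have hfin := hV.2.2.2.2
  rw [Filter.eventually_atTop] at t1 t2
  by_cases c1 : C ∈ U
  · obtain ⟨n2, t2'⟩ := t2
    have hmaps : ∀ n : ℕ, h ^ (n + n2) • C ∈ {A | A ∈ U ∧ (1 : G) ∉ A} := by
      intro n
      refine ⟨(hmemn _ _).1 c1, ?_⟩
      rw [Set.mem_smul_set_iff_inv_smul_mem, smul_eq_mul, mul_one, ← inv_pow]
      exact t2' _ (Nat.le_add_left _ _)
    obtain ⟨i, j, hij, heq⟩ : ∃ i j : ℕ, i < j ∧ h ^ (i + n2) • C = h ^ (j + n2) • C := by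
      by_contra hcon
      push Not at hcon
      have : Function.Injective (fun n : ℕ => h ^ (n + n2) • C) := by
        intro i j hij
        rcases lt_trichotomy i j with h | h | h
        · exact absurd hij (hcon _ _ h)
        · exact h
        · exact absurd hij.symm (hcon _ _ h)
      exact Set.infinite_of_injective_forall_mem this hmaps hfin
    apply not_periodic (Filter.eventually_atTop.2 t1) (Filter.eventually_atTop.2 ⟨n2, t2'⟩) (j - i) (by omega)
    have : j + n2 = (i + n2) + (j - i) := by omega
    rw [this, pow_add _ (_ + _), mul_smul] at heq
    exact (MulAction.injective _ heq).symm
  by_cases c2 : Cᶜ ∈ U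
  · obtain ⟨n1, t1'⟩ := t1
    have hmaps : ∀ n : ℕ, h⁻¹ ^ (n + n1) • Cᶜ ∈ {A | A ∈ U ∧ (1 : G) ∉ A} := by
      intro n
      refine ⟨(hmemn' _ _).1 c2, ?_⟩
      rw [Set.mem_smul_set_iff_inv_smul_mem, smul_eq_mul, mul_one, inv_pow, inv_inv]
      exact fun h' => h' (t1' _ (Nat.le_add_left _ _))
    obtain ⟨i, j, hij, heq⟩ : ∃ i j : ℕ, i < j ∧ h⁻¹ ^ (i + n1) • Cᶜ = h⁻¹ ^ (j + n1) • Cᶜ := by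
      by_contra hcon
      push Not at hcon
      have : Function.Injective (fun n : ℕ => h⁻¹ ^ (n + n1) • Cᶜ) := by
        intro i j hij
        rcases lt_trichotomy i j with h | h | h
        · exact absurd hij (hcon _ _ h)
        · exact h
        · exact absurd hij.symm (hcon _ _ h)
      exact Set.infinite_of_injective_forall_mem this hmaps hfin
    apply not_periodic (Filter.eventually_atTop.2 ⟨n1, t1'⟩) (Filter.eventually_atTop.2 t2) (j - i) (by omega)
    have : j + n1 = (i + n1) + (j - i) := by omega
    rw [this, pow_add _ (_ + _), mul_smul] at heq
    have h3 := MulAction.injective _ heq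
    rw [smul_compl] at h3
    have h4 : C = h⁻¹ ^ (j - i) • C := compl_injective h3
    rw [inv_pow, eq_inv_smul_iff] at h4
    exact h4
  · have b1 : h • C ∉ U := by rwa [← hmem]
    have b2 : (h • C)ᶜ ∉ U := by rwa [← smul_compl, ← hmem]
    apply not_periodic (Filter.eventually_atTop.2 t1) (Filter.eventually_atTop.2 t2) 2 (by omega)
    rw [pow_two, mul_smul]
    rcases hV.2.2.2.1 C hC (h • C) (hE.inv _ _ hC) c1 c2 b1 b2 with h3 | h3
    · rw [h3, h3]
    · rw [h3, smul_compl, h3, _root_.compl_compl]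

lemma vv_stab (hE : CutSys N E) [N.FiniteIndex] (U : hE.VV) : (MulAction.stabilizer G U : Set G).Finite := by
  have : Finite (G ⧸ N) := inferInstance
  apply Set.Finite.of_finite_image (f := fun g : G => (g : G ⧸ N)) (Set.toFinite _)
  intro g hg k hk hgk
  have h1 : g⁻¹ * k ∈ N := QuotientGroup.eq.1 hgk
  have h2 : (g⁻¹ * k) • U = U := by
    have e1 : g • U = U := hg
    have e2 : k • U = U := hk
    rw [mul_smul, e2, inv_smul_eq_iff, e1]
  by_contra hne
  exact hE.no_fix h1 (fun h => hne (inv_mul_eq_one.1 h)) U h2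


open Classical in
/-- every finite subgroup fixes a vertex -/
lemma fix_vertex (hE : CutSys N E) (K : Subgroup G) (hK : (K : Set G).Finite) :
    ∃ U : hE.VV, ∀ k ∈ K, k • U = U := by
  let c : Set G → ℕ := fun A => ((K : Set G) ∩ A).ncard
  let M := (K : Set G).ncard
  have hM : 0 < M := (Set.ncard_pos hK).2 ⟨1, K.one_mem⟩
  have hfi : ∀ A : Set G, ((K : Set G) ∩ A).Finite := fun A => hK.subset Set.inter_subset_left
  have hcm : ∀ A B : Set G, A ⊆ B → c A ≤ c B := fun A B h =>
    Set.ncard_le_ncard (Set.inter_subset_inter_right _ h) (hfi B)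
  have hcc : ∀ A : Set G, c A + c Aᶜ = M := by
    intro A
    have h1 : (K : Set G) = ((K : Set G) ∩ A) ∪ ((K : Set G) ∩ Aᶜ) := (Set.inter_union_compl _ _).symm
    have h2 := Set.ncard_union_eq (s := (K : Set G) ∩ A) (t := (K : Set G) ∩ Aᶜ)
      (by rw [Set.disjoint_left]; intro x hx hx'; exact hx'.2 hx.2) (hfi _) (hfi _)
    rw [← h1] at h2
    exact h2.symm
  have hcs : ∀ k ∈ K, ∀ A : Set G, c (k • A) = c A := by
    intro k hk A
    have : (K : Set G) ∩ k • A = k • ((K : Set G) ∩ A) := by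
      rw [Set.smul_set_inter]
      congr 1
      ext x
      rw [Set.mem_smul_set_iff_inv_smul_mem]
      simp only [SetLike.mem_coe, smul_eq_mul]
      rw [Subgroup.mul_mem_cancel_left _ (K.inv_mem hk)]
    simp only [c]
    rw [this, Set.ncard_smul_set]
  let t : Set (Set G) := {A | A ∈ E ∧ 2 * c A = M}
  have hpos : ∀ A : Set G, 0 < c A → ∃ x ∈ K, x ∈ A := by
    intro A h
    obtain ⟨x, hx⟩ := (Set.ncard_pos (hfi A)).1 h
    exact ⟨x, hx.1, hx.2⟩
  have ht : t.Finite := by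
    have : (⋃ x ∈ (K : Set G), ⋃ y ∈ (K : Set G), {A | A ∈ E ∧ x ∈ A ∧ y ∉ A}).Finite :=
      hK.biUnion (fun x _ => hK.biUnion (fun y _ => hE.finsep x y))
    apply this.subset
    rintro A ⟨hA, h⟩
    obtain ⟨x, hx, hxA⟩ := hpos A (by omega)
    obtain ⟨y, hy, hyA⟩ := hpos Aᶜ (by have := hcc A; omega)
    simp only [Set.mem_iUnion]
    exact ⟨x, hx, y, hy, hA, hxA, hyA⟩
  have htc : ∀ A, Aᶜ ∈ t ↔ A ∈ t := by
    have : ∀ A, A ∈ t → Aᶜ ∈ t := by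
      rintro A ⟨h1, h2⟩
      exact ⟨hE.compl A h1, by have := hcc A; omega⟩
    intro A
    refine ⟨fun h => ?_, this A⟩
    have := this _ h
    rwa [_root_.compl_compl] at this
  let lo : Set G → ℕ := fun A => {B | B ∈ t ∧ B ⊂ A}.ncard
  let hi : Set G → ℕ := fun A => {B | B ∈ t ∧ A ⊂ B}.ncard
  have hlo : ∀ A, lo Aᶜ = hi A := by
    intro A
    simp only [lo, hi]
    rw [← Set.ncard_image_of_injective {B | B ∈ t ∧ A ⊂ B} (f := fun A : Set G => Aᶜ) compl_injective]
    congr 1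
    ext B
    constructor
    · rintro ⟨h1, h2⟩
      refine ⟨Bᶜ, ⟨(htc B).2 h1, ?_⟩, _root_.compl_compl B⟩
      have := compl_lt_compl_iff_lt.2 h2
      rw [_root_.compl_compl] at this
      exact this
    · rintro ⟨C, ⟨h1, h2⟩, rfl⟩
      exact ⟨(htc C).2 h1, compl_lt_compl_iff_lt.2 h2⟩
  have hhi : ∀ A, hi Aᶜ = lo A := by
    intro A; rw [← hlo, _root_.compl_compl]
  have hlt : ∀ A ∈ t, ∀ B, A ⊂ B → lo A < lo B ∧ hi B ≤ hi A := by
    intro A hA B hAB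
    constructor
    · apply Set.ncard_lt_ncard _ (ht.subset (fun C hC => hC.1))
      constructor
      · exact fun C hC => ⟨hC.1, hC.2.trans hAB⟩
      · intro h
        exact (h (show A ∈ _ from ⟨hA, hAB⟩)).2.2 le_rfl
    · apply Set.ncard_le_ncard _ (ht.subset (fun C hC => hC.1))
      exact fun C hC => ⟨hC.1, hAB.trans hC.2⟩
  have htk : ∀ k ∈ K, ∀ A, k • A ∈ t ↔ A ∈ t := by
    intro k hk A
    simp only [t, Set.mem_setOf_eq, hcs k hk, hE.inv']
  have hlok : ∀ k ∈ K, ∀ A, lo (k • A) = lo A ∧ hi (k • A) = hi A := by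
    intro k hk A
    have hss : ∀ B C : Set G, k • B ⊂ k • C ↔ B ⊂ C := by
      intro B C
      simp only [ssubset_iff_subset_not_subset, Set.smul_set_subset_smul_set_iff]
    constructor
    · simp only [lo]
      rw [← Set.ncard_image_of_injective {B | B ∈ t ∧ B ⊂ A} (f := fun A : Set G => k • A) (MulAction.injective k)]
      congr 1
      ext B
      constructor
      · rintro ⟨h1, h2⟩
        refine ⟨k⁻¹ • B, ⟨(htk _ (K.inv_mem hk) _).2 h1, ?_⟩, smul_inv_smul _ _⟩
        rw [← hss, smul_inv_smul]; exact h2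
      · rintro ⟨C, ⟨h1, h2⟩, rfl⟩
        exact ⟨(htk _ hk C).2 h1, (hss _ _).2 h2⟩
    · simp only [hi]
      rw [← Set.ncard_image_of_injective {B | B ∈ t ∧ A ⊂ B} (f := fun A : Set G => k • A) (MulAction.injective k)]
      congr 1
      ext B
      constructor
      · rintro ⟨h1, h2⟩
        refine ⟨k⁻¹ • B, ⟨(htk _ (K.inv_mem hk) _).2 h1, ?_⟩, smul_inv_smul _ _⟩
        rw [← hss, smul_inv_smul]; exact h2
      · rintro ⟨C, ⟨h1, h2⟩, rfl⟩
        exact ⟨(htk _ hk C).2 h1, (hss _ _).2 h2⟩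
  let U : Set (Set G) := {A | A ∈ E ∧ (M < 2 * c A ∨ (2 * c A = M ∧ hi A < lo A))}
  have hUV : IsVert E U := by
    refine ⟨fun A hA => hA.1, ?_, ?_, ?_, ?_⟩
    · rintro A ⟨hA, h⟩ B hB hAB
      refine ⟨hB, ?_⟩
      have h1 := hcm A B hAB
      rcases h with h | h
      · left; omega
      · by_cases hb : 2 * c B = M
        · right
          refine ⟨hb, ?_⟩
          rcases eq_or_ssubset_of_subset hAB with rfl | hss
          · exact h.2
          · have := hlt A ⟨hA, h.1⟩ B hss
            omega
        · left; omega
    · rintro A ⟨hA, h⟩ ⟨hA', h'⟩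
      have h1 := hcc A
      rw [hlo, hhi] at h'
      omega
    · have key : ∀ A ∈ E, A ∉ U → Aᶜ ∉ U → A ∈ t ∧ lo A = hi A := by
        intro A hA h1 h2
        simp only [U, Set.mem_setOf_eq, hA, hE.compl A hA, true_and, hlo, hhi] at h1 h2
        have h3 := hcc A
        have : 2 * c A = M := by omega
        exact ⟨⟨hA, this⟩, by omega⟩
      have key2 : ∀ A B, A ∈ t → B ∈ t → lo A = hi A → lo B = hi B → A ⊆ B → A = B := by
        intro A B a1 b1 a2 b2 h
        rcases eq_or_ssubset_of_subset h with h | h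
        · exact h
        · have := hlt A a1 B h
          omega
      intro A hA B hB a1 a2 b1 b2
      obtain ⟨a3, a4⟩ := key A hA a1 a2
      obtain ⟨b3, b4⟩ := key B hB b1 b2
      have b4' : lo Bᶜ = hi Bᶜ := by rw [hlo, hhi, b4]
      have a4' : lo Aᶜ = hi Aᶜ := by rw [hlo, hhi, a4]
      rcases hE.nested A hA B hB with h | h | h | h
      · left; exact (key2 A B a3 b3 a4 b4 h).symm
      · left; exact key2 B A b3 a3 b4 a4 h
      · right; rw [key2 A Bᶜ a3 ((htc B).2 b3) a4 b4' h, _root_.compl_compl]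
      · right; exact (key2 Aᶜ B ((htc A).2 a3) b3 a4' b4 h).symm
    · have : (⋃ x ∈ (K : Set G), {A | A ∈ E ∧ x ∈ A ∧ (1 : G) ∉ A}).Finite :=
        hK.biUnion (fun x _ => hE.finsep x 1)
      apply this.subset
      rintro A ⟨⟨hA, h⟩, h1⟩
      obtain ⟨x, hx, hxA⟩ := hpos A (by omega)
      simp only [Set.mem_iUnion]
      exact ⟨x, hx, hA, hxA, h1⟩
  refine ⟨⟨U, hUV⟩, fun k hk => ?_⟩
  apply Subtype.ext
  change k • U = U
  ext A
  rw [Set.mem_smul_set_iff_inv_smul_mem]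
  have h1 := hlok _ (K.inv_mem hk) A
  simp only [U, Set.mem_setOf_eq, hE.inv', hcs _ (K.inv_mem hk), h1.1, h1.2]

end CutSys

/-- finitely many vertex orbits -/
lemma GTree.finite_vertex_orbits {G V W : Type*} [Group G] [MulAction G V] [MulAction G W] (T : GTree G V W)
    (h : Finite (MulAction.orbitRel.Quotient G W)) : Finite (MulAction.orbitRel.Quotient G V) := by
  by_cases hW : Nonempty W
  swap
  · have : Subsingleton V := ⟨fun v w => T.ext _ _ (fun a => absurd ⟨a⟩ hW)⟩
    have : Finite V := inferInstance
    exact Quotient.finite _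
  obtain ⟨a0⟩ := hW
  let f : (MulAction.orbitRel.Quotient G W) × Bool → MulAction.orbitRel.Quotient G V :=
    fun x => if x.2 then Quotient.mk _ (T.p x.1.out) else Quotient.mk _ (T.q x.1.out)
  apply Finite.of_surjective f
  intro o
  induction o using Quotient.inductionOn with
  | _ v =>
  have hv : ∃ a, v = T.p a ∨ v = T.q a := by
    by_cases h1 : v = T.p a0
    · exact ⟨a0, Or.inl h1⟩
    · obtain ⟨a, -, h | h⟩ := T.step h1
      · exact ⟨a, Or.inl h.1⟩
      · exact ⟨a, Or.inr h.1⟩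
  obtain ⟨a, ha⟩ := hv
  have h1 : (Quotient.mk _ (Quotient.mk _ a : MulAction.orbitRel.Quotient G W).out :
    MulAction.orbitRel.Quotient G W) = Quotient.mk _ a := Quotient.out_eq _
  obtain ⟨g, hg⟩ := MulAction.orbitRel_apply.1 (Quotient.exact h1)
  simp only at hg
  rcases ha with rfl | rfl
  · refine ⟨(Quotient.mk _ a, true), ?_⟩
    simp only [f, if_true]
    apply Quotient.sound
    refine ⟨g, ?_⟩
    simp only
    rw [← T.p_smul, hg]
  · refine ⟨(Quotient.mk _ a, false), ?_⟩
    simp only [f]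
    apply Quotient.sound
    refine ⟨g, ?_⟩
    simp only
    rw [← T.q_smul, hg]

end

section
open Pointwise

namespace CutSys
variable {G : Type*} [Group G] {N : Subgroup G} {E : Set (Set G)}

lemma exists_reps (hE : CutSys N E) : ∃ R : Set hE.VV, R.Finite ∧ ∀ v : hE.VV, ∃ r ∈ R, ∃ g : G, v = g • r := by
  have : Finite (MulAction.orbitRel.Quotient G hE.VV) := hE.tree.finite_vertex_orbits hE.ww_orb
  refine ⟨Set.range (fun o : MulAction.orbitRel.Quotient G hE.VV => o.out), Set.finite_range _, fun v => ?_⟩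
  refine ⟨_, ⟨Quotient.mk _ v, rfl⟩, ?_⟩
  have h1 : (Quotient.mk _ (Quotient.mk _ v : MulAction.orbitRel.Quotient G hE.VV).out :
    MulAction.orbitRel.Quotient G hE.VV) = Quotient.mk _ v := Quotient.out_eq _
  obtain ⟨h, hh⟩ := MulAction.orbitRel_apply.1 (Quotient.exact h1.symm)
  exact ⟨h, hh.symm⟩

/-- finitely many homomorphisms from a finite group up to conjugation -/
lemma hom_finite (hE : CutSys N E) [N.FiniteIndex] (K : Type*) [Group K] [Finite K] :
    ∃ R : Set (K →* G), R.Finite ∧ ∀ α : K →* G, ∃ β ∈ R, ∃ g : G, ∀ x, α x = g * β x * g⁻¹ := by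
  obtain ⟨R, hR, h⟩ := hE.exists_reps
  refine ⟨⋃ r ∈ R, {β : K →* G | ∀ x, β x • r = r}, ?_, ?_⟩
  · apply hR.biUnion
    intro r _
    apply Set.Finite.of_finite_image (f := fun β : K →* G => (β : K → G)) _ DFunLike.coe_injective.injOn
    apply (Set.Finite.pi' (fun _ : K => hE.vv_stab r)).subset
    rintro _ ⟨β, hβ, rfl⟩ x
    exact hβ x
  · intro α
    obtain ⟨U, hU⟩ := hE.fix_vertex α.range (Set.finite_range α)
    obtain ⟨r, hr, g, rfl⟩ := h U
    refine ⟨(MulAut.conj g⁻¹).toMonoidHom.comp α, ?_, g, ?_⟩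
    · simp only [Set.mem_iUnion]
      refine ⟨r, hr, fun x => ?_⟩
      have := hU (α x) ⟨x, rfl⟩
      change (g⁻¹ * α x * g⁻¹⁻¹) • r = r
      rw [inv_inv, mul_smul, mul_smul, this, inv_smul_smul]
    · intro x
      change α x = g * (g⁻¹ * α x * g⁻¹⁻¹) * g⁻¹
      group

/-- finitely many finite subgroups control bijectivity -/
lemma rigid (hE : CutSys N E) [N.FiniteIndex]
    (hco : ∀ φ : G →* G, Function.Injective φ → Function.Surjective φ) :
    ∃ 𝒦 : Set (Subgroup G), 𝒦.Finite ∧ (∀ K ∈ 𝒦, Finite K) ∧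
      ∀ φ : G →* G, (∀ K ∈ 𝒦, ∃ g : G, ∀ x ∈ K, φ x = g * x * g⁻¹) → Function.Bijective φ := by
  obtain ⟨R, hR, h⟩ := hE.exists_reps
  refine ⟨(fun r => MulAction.stabilizer G r) '' R, hR.image _, ?_, ?_⟩
  · rintro _ ⟨r, _, rfl⟩
    exact (hE.vv_stab r).to_subtype
  · intro φ hφ
    have := hE.vv_nonempty
    apply hE.tree.core' hco hE.ww_stab hE.ww_orb φ
    intro v
    obtain ⟨r, hr, g, rfl⟩ := h v
    obtain ⟨c, hc⟩ := hφ _ ⟨r, hr, rfl⟩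
    refine ⟨φ g * c * g⁻¹, fun x hx => ?_⟩
    have h1 : g⁻¹ * x * g ∈ MulAction.stabilizer G r := by
      rw [MulAction.mem_stabilizer_iff, mul_smul, mul_smul, hx, inv_smul_smul]
    have h2 := hc _ h1
    have h3 : φ x = φ g * φ (g⁻¹ * x * g) * (φ g)⁻¹ := by simp [mul_assoc]
    rw [h3, h2]
    group

end CutSys

end

section
open Pointwise

namespace Cuts
variable {G : Type*} [Group G]

/-- directed boundary of a set -/
def cbd (S : Set G) (D : Set G) : Set (G × G) := {p | p.2 ∈ S ∧ p.1 ∈ D ∧ p.1 * p.2 ∉ D}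

lemma mem_cbd {S D : Set G} {p : G × G} : p ∈ cbd S D ↔ p.2 ∈ S ∧ p.1 ∈ D ∧ p.1 * p.2 ∉ D := Iff.rfl

/-- number of boundary edges -/
noncomputable def size (S : Set G) (D : Set G) : ℕ := (cbd S D).ncard

/-- the standing assumptions on the generating set -/
structure GenSet (S : Set G) : Prop where
  fin : S.Finite
  inv : ∀ s ∈ S, s⁻¹ ∈ S
  gen : Subgroup.closure S = ⊤

lemma cbd_compl {S : Set G} (hS : GenSet S) (D : Set G) :
    cbd S Dᶜ = (fun p : G × G => (p.1 * p.2, p.2⁻¹)) '' cbd S D := by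
  ext ⟨x, s⟩
  simp only [mem_cbd, Set.mem_image, Prod.exists, Prod.mk.injEq, Set.mem_compl_iff, not_not]
  constructor
  · rintro ⟨h1, h2, h3⟩
    exact ⟨x * s, s⁻¹, ⟨hS.inv _ h1, h3, by simpa using h2⟩, by simp, by simp⟩
  · rintro ⟨a, b, ⟨h1, h2, h3⟩, rfl, rfl⟩
    exact ⟨hS.inv _ h1, h3, by simpa using h2⟩

lemma flip_inj : Function.Injective (fun p : G × G => (p.1 * p.2, p.2⁻¹)) := by
  rintro ⟨a, b⟩ ⟨c, d⟩ h
  simp only [Prod.mk.injEq, inv_inj] at h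
  obtain ⟨h1, rfl⟩ := h
  simpa using h1

lemma size_compl {S : Set G} (hS : GenSet S) (D : Set G) : size S Dᶜ = size S D := by
  rw [size, cbd_compl hS, Set.ncard_image_of_injective _ flip_inj, size]

lemma cbd_compl_finite {S : Set G} (hS : GenSet S) {D : Set G} (h : (cbd S D).Finite) :
    (cbd S Dᶜ).Finite := by
  rw [cbd_compl hS]; exact h.image _

lemma cbd_smul (S : Set G) (g : G) (D : Set G) :
    cbd S (g • D) = (fun p : G × G => (g * p.1, p.2)) '' cbd S D := by
  ext ⟨x, s⟩
  simp only [mem_cbd, Set.mem_image, Prod.exists, Prod.mk.injEq,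
    Set.mem_smul_set_iff_inv_smul_mem, smul_eq_mul]
  constructor
  · rintro ⟨h1, h2, h3⟩
    exact ⟨g⁻¹ * x, s, ⟨h1, h2, by simpa [mul_assoc] using h3⟩, by simp, rfl⟩
  · rintro ⟨a, b, ⟨h1, h2, h3⟩, rfl, rfl⟩
    exact ⟨h1, by simpa using h2, by simpa [mul_assoc] using h3⟩

lemma shift_inj (g : G) : Function.Injective (fun p : G × G => (g * p.1, p.2)) := by
  rintro ⟨a, b⟩ ⟨c, d⟩ h
  simpa using h

lemma size_smul (S : Set G) (g : G) (D : Set G) : size S (g • D) = size S D := by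
  rw [size, cbd_smul, Set.ncard_image_of_injective _ (shift_inj g), size]

lemma cbd_smul_finite {S : Set G} (g : G) {D : Set G} (h : (cbd S D).Finite) :
    (cbd S (g • D)).Finite := by
  rw [cbd_smul]; exact h.image _

lemma ncard_submod {α : Type*} {A B C D : Set α} (hC : C.Finite) (hD : D.Finite)
    (h1 : A ∪ B ⊆ C ∪ D) (h2 : A ∩ B ⊆ C ∩ D) : A.ncard + B.ncard ≤ C.ncard + D.ncard := by
  have hAB := (hC.union hD).subset h1
  have hA := hAB.subset (Set.subset_union_left)
  have hB := hAB.subset (Set.subset_union_right)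
  rw [← Set.ncard_union_add_ncard_inter A B hA hB, ← Set.ncard_union_add_ncard_inter C D hC hD]
  exact add_le_add (Set.ncard_le_ncard h1 (hC.union hD)) (Set.ncard_le_ncard h2 (hC.inter_of_left _))

lemma ncard_submod_lt {α : Type*} {A B C D : Set α} (hC : C.Finite) (hD : D.Finite)
    (h1 : A ∪ B ⊂ C ∪ D) (h2 : A ∩ B ⊆ C ∩ D) : A.ncard + B.ncard < C.ncard + D.ncard := by
  have hAB := (hC.union hD).subset h1.subset
  have hA := hAB.subset (Set.subset_union_left)
  have hB := hAB.subset (Set.subset_union_right)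
  rw [← Set.ncard_union_add_ncard_inter A B hA hB, ← Set.ncard_union_add_ncard_inter C D hC hD]
  exact add_lt_add_of_lt_of_le (Set.ncard_lt_ncard h1 (hC.union hD))
    (Set.ncard_le_ncard h2 (hC.inter_of_left _))

lemma cbd_union_sub (S C D : Set G) :
    cbd S (C ∩ D) ∪ cbd S (C ∪ D) ⊆ cbd S C ∪ cbd S D := by
  rintro ⟨x, s⟩
  simp only [Set.mem_union, mem_cbd, Set.mem_inter_iff]
  grind

lemma cbd_inter_sub (S C D : Set G) :
    cbd S (C ∩ D) ∩ cbd S (C ∪ D) ⊆ cbd S C ∩ cbd S D := by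
  rintro ⟨x, s⟩
  simp only [Set.mem_union, mem_cbd, Set.mem_inter_iff]
  grind

lemma size_submod {S C D : Set G} (hC : (cbd S C).Finite) (hD : (cbd S D).Finite) :
    size S (C ∩ D) + size S (C ∪ D) ≤ size S C + size S D :=
  ncard_submod hC hD (cbd_union_sub S C D) (cbd_inter_sub S C D)

lemma cbd_inter_finite {S C D : Set G} (hC : (cbd S C).Finite) (hD : (cbd S D).Finite) :
    (cbd S (C ∩ D)).Finite :=
  (hC.union hD).subset (Set.subset_union_left.trans (cbd_union_sub S C D))

lemma cbd_union_finite {S C D : Set G} (hC : (cbd S C).Finite) (hD : (cbd S D).Finite) :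
    (cbd S (C ∪ D)).Finite :=
  (hC.union hD).subset (Set.subset_union_right.trans (cbd_union_sub S C D))

/-- almost invariance under right multiplication -/
lemma almost_inv {S : Set G} (hS : GenSet S) {D : Set G} (hD : (cbd S D).Finite) (t : G) :
    {x | ¬ (x ∈ D ↔ x * t ∈ D)}.Finite := by
  have ht : t ∈ Subgroup.closure S := by rw [hS.gen]; trivial
  induction ht using Subgroup.closure_induction with
  | mem s hs =>
    refine ((hD.image Prod.fst).union ((cbd_compl_finite hS hD).image Prod.fst)).subset ?_
    intro x hx
    rw [Set.mem_ofPred_eq] at hx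
    by_cases h : x ∈ D
    · exact Or.inl ⟨(x, s), ⟨hs, h, by grind⟩, rfl⟩
    · exact Or.inr ⟨(x, s), ⟨hs, h, by simp; grind⟩, rfl⟩
  | one => simp
  | mul a b _ _ iha ihb =>
    refine (iha.union (ihb.preimage (f := fun x => x * a) (mul_left_injective a).injOn)).subset ?_
    intro x hx
    simp only [Set.mem_ofPred_eq, Set.mem_union, Set.mem_preimage, ← mul_assoc] at hx ⊢
    grind
  | inv a _ iha =>
    refine (iha.preimage (f := fun x => x * a⁻¹) (mul_left_injective a⁻¹).injOn).subset ?_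
    intro x hx
    simp only [Set.mem_ofPred_eq, Set.mem_preimage, inv_mul_cancel_right] at hx ⊢
    grind

/-- powers of `h` eventually lie in `D` -/
def tail (D : Set G) (h : G) : Prop := ∀ᶠ n : ℕ in Filter.atTop, h ^ n ∈ D

/-- infinite order -/
def InfOrd (h : G) : Prop := Function.Injective (fun n : ℕ => h ^ n)

lemma InfOrd.inv {h : G} (hh : InfOrd h) : InfOrd h⁻¹ := by
  intro a b hab
  apply hh
  simpa using hab

lemma InfOrd.ne_one {h : G} (hh : InfOrd h) : h ≠ 1 := by
  rintro rfl
  have := @hh 0 1 (by simp)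
  omega

lemma ev_almost {S : Set G} (hS : GenSet S) {D : Set G} (hD : (cbd S D).Finite) {h : G}
    (hh : InfOrd h) (t : G) : ∀ᶠ n : ℕ in Filter.atTop, (h ^ n ∈ D ↔ h ^ n * t ∈ D) := by
  have := (almost_inv hS hD t).preimage (f := fun n : ℕ => h ^ n) hh.injOn
  rw [← Nat.cofinite_eq_atTop, Filter.eventually_cofinite]
  exact this

lemma tail_or {S : Set G} (hS : GenSet S) {D : Set G} (hD : (cbd S D).Finite) {h : G}
    (hh : InfOrd h) : tail D h ∨ tail Dᶜ h := by
  have := ev_almost hS hD hh h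
  obtain ⟨n, hn⟩ := Filter.eventually_atTop.1 this
  have key : ∀ m ≥ n, (h ^ m ∈ D ↔ h ^ n ∈ D) := by
    intro m hm
    induction m, hm using Nat.le_induction with
    | base => rfl
    | succ m hm ih => rw [← ih, hn m hm, pow_succ]
  by_cases h0 : h ^ n ∈ D
  · exact Or.inl (Filter.eventually_atTop.2 ⟨n, fun m hm => (key m hm).2 h0⟩)
  · exact Or.inr (Filter.eventually_atTop.2 ⟨n, fun m hm => fun h1 => h0 ((key m hm).1 h1)⟩)

lemma tail_inter (C D : Set G) (h : G) : tail (C ∩ D) h ↔ tail C h ∧ tail D h :=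
  Filter.eventually_and

lemma not_tail_empty (h : G) : ¬ tail ∅ h := by
  intro H
  obtain ⟨n, hn⟩ := H.exists
  exact hn

lemma tail_compl {S : Set G} (hS : GenSet S) {D : Set G} (hD : (cbd S D).Finite) {h : G}
    (hh : InfOrd h) : tail Dᶜ h ↔ ¬ tail D h := by
  constructor
  · intro h1 h2
    exact not_tail_empty h (by rw [← Set.inter_compl_self D, tail_inter]; exact ⟨h2, h1⟩)
  · intro h1
    exact (tail_or hS hD hh).resolve_left h1

lemma tail_union {S : Set G} (hS : GenSet S) {C D : Set G} (hC : (cbd S C).Finite)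
    (hD : (cbd S D).Finite) {h : G} (hh : InfOrd h) :
    tail (C ∪ D) h ↔ tail C h ∨ tail D h := by
  have := tail_compl hS (cbd_union_finite hC hD) hh
  rw [Set.compl_union, tail_inter, tail_compl hS hC hh, tail_compl hS hD hh] at this
  grind

lemma tail_nonempty {D : Set G} {h : G} (H : tail D h) : D.Nonempty := by
  obtain ⟨n, hn⟩ := H.exists
  exact ⟨_, hn⟩

lemma tail_smul {S : Set G} (hS : GenSet S) {D : Set G} (hD : (cbd S D).Finite) {h : G}
    (hh : InfOrd h) (g : G) : tail (g • D) (g * h * g⁻¹) ↔ tail D h := by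
  have := ev_almost hS hD hh g⁻¹
  refine Filter.eventually_congr (this.mono fun n hn => ?_)
  rw [conj_pow, Set.mem_smul_set_iff_inv_smul_mem, hn]
  simp [mul_assoc]

/-- `D` separates the two ends of `h` -/
def sep (D : Set G) (h : G) : Prop := ¬ (tail D h ↔ tail D h⁻¹)

lemma sep_compl {S : Set G} (hS : GenSet S) {D : Set G} (hD : (cbd S D).Finite) {h : G}
    (hh : InfOrd h) : sep Dᶜ h ↔ sep D h := by
  rw [sep, sep, tail_compl hS hD hh, tail_compl hS hD hh.inv]; grind

lemma sep_smul {S : Set G} (hS : GenSet S) {D : Set G} (hD : (cbd S D).Finite) {h : G}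
    (hh : InfOrd h) (g : G) : sep (g • D) (g * h * g⁻¹) ↔ sep D h := by
  have h2 := tail_smul hS hD hh.inv g
  have e : (g * h * g⁻¹)⁻¹ = g * h⁻¹ * g⁻¹ := by group
  rw [sep, sep, tail_smul hS hD hh, e, h2]

/-- connectedness -/
def conn (S D : Set G) : Prop := ∀ D' ⊆ D, D'.Nonempty →
  (∀ x ∈ D', ∀ s ∈ S, x * s ∈ D → x * s ∈ D') → D' = D

/-- no boundary -/
lemma eq_univ_of_cbd {S : Set G} (hS : GenSet S) {D : Set G} (hD : cbd S D = ∅)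
    (hne : D.Nonempty) : D = Set.univ := by
  obtain ⟨x, hx⟩ := hne
  have h1 : ∀ y ∈ D, ∀ s ∈ S, y * s ∈ D := by
    intro y hy s hs
    by_contra hc
    have : (y, s) ∈ cbd S D := ⟨hs, hy, hc⟩
    rw [hD] at this; exact this
  have key : ∀ t : G, ∀ y, y ∈ D ↔ y * t ∈ D := by
    intro t
    have ht : t ∈ Subgroup.closure S := by rw [hS.gen]; trivial
    induction ht using Subgroup.closure_induction with
    | mem s hs =>
      intro y
      refine ⟨fun hy => h1 y hy s hs, fun hy => ?_⟩
      have := h1 _ hy _ (hS.inv s hs)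
      simpa using this
    | one => simp
    | mul a b _ _ iha ihb => intro y; rw [iha y, ihb (y * a), mul_assoc]
    | inv a _ iha => intro y; have := iha (y * a⁻¹); simp at this; exact this.symm
  ext y
  have := (key (x⁻¹ * y) x).1 hx
  simpa using this

/-- minimal separating cuts -/
def Minset (S : Set G) (h : G) : Set (Set G) :=
  {D | (cbd S D).Finite ∧ sep D h ∧ ∀ D', (cbd S D').Finite → sep D' h → size S D ≤ size S D'}

lemma Minset.compl {S : Set G} (hS : GenSet S) {h : G} (hh : InfOrd h) {D : Set G}
    (hD : D ∈ Minset S h) : Dᶜ ∈ Minset S h := by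
  obtain ⟨h1, h2, h3⟩ := hD
  refine ⟨cbd_compl_finite hS h1, (sep_compl hS h1 hh).2 h2, ?_⟩
  rwa [size_compl hS]

lemma conj_infOrd {h : G} (hh : InfOrd h) (g : G) : InfOrd (g * h * g⁻¹) := by
  intro a b hab
  simp only [conj_pow] at hab
  exact hh (by simpa using hab)

lemma Minset.smul {S : Set G} (hS : GenSet S) {h : G} (hh : InfOrd h) {D : Set G}
    (hD : D ∈ Minset S h) (g : G) : g • D ∈ Minset S (g * h * g⁻¹) := by
  obtain ⟨h1, h2, h3⟩ := hD
  refine ⟨cbd_smul_finite g h1, (sep_smul hS h1 hh g).2 h2, fun D' f' s' => ?_⟩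
  rw [size_smul, ← size_smul S g⁻¹ D']
  refine h3 _ (cbd_smul_finite _ f') ?_
  have := (sep_smul hS f' (conj_infOrd hh g) g⁻¹).2 s'
  convert this using 1
  group

lemma Minset.conn {S : Set G} (hS : GenSet S) {h : G} (hh : InfOrd h) {D : Set G}
    (hD : D ∈ Minset S h) : conn S D := by
  obtain ⟨h1, h2, h3⟩ := hD
  intro D' hD' hne hcl
  by_contra hneq
  have hne2 : (D \ D').Nonempty := by
    rw [Set.nonempty_iff_ne_empty]
    intro h0
    exact hneq (hD'.antisymm (Set.sdiff_eq_empty.1 h0))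
  have hcl2 : ∀ x ∈ D \ D', ∀ s ∈ S, x * s ∈ D → x * s ∈ D \ D' := by
    rintro x ⟨hx, hx'⟩ s hs hxs
    refine ⟨hxs, fun hc => hx' ?_⟩
    have := hcl _ hc _ (hS.inv s hs) (by simpa using hx)
    simpa using this
  have main : ∀ A B : Set G, A ∪ B = D → A ∩ B = ∅ → B.Nonempty → A.Nonempty →
      (∀ x ∈ A, ∀ s ∈ S, x * s ∈ D → x * s ∈ A) → (∀ x ∈ B, ∀ s ∈ S, x * s ∈ D → x * s ∈ B) →
      ¬ sep A h := by
    intro A B hu hi hB hA ca cb hs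
    have sA : cbd S A ⊆ cbd S D := by
      rintro ⟨x, s⟩ ⟨q1, q2, q3⟩
      exact ⟨q1, hu ▸ Or.inl q2, fun hc => q3 (ca _ q2 _ q1 hc)⟩
    have e := h3 A (h1.subset sA) hs
    have eq := Set.eq_of_subset_of_ncard_le sA e h1
    have : cbd S B = ∅ := by
      rw [Set.eq_empty_iff_forall_notMem]
      rintro ⟨x, s⟩ ⟨q1, q2, q3⟩
      have hm : (x, s) ∈ cbd S D := ⟨q1, hu ▸ Or.inr q2, fun hc => q3 (cb _ q2 _ q1 hc)⟩
      rw [← eq] at hm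
      have : x ∈ A ∩ B := ⟨hm.2.1, q2⟩
      rw [hi] at this; exact this
    have hBu := eq_univ_of_cbd hS this hB
    rw [hBu, Set.inter_univ] at hi
    exact hA.ne_empty hi
  have n1 := main D' (D \ D') (by simpa using hD') (by simp) hne2 hne hcl hcl2
  have n2 := main (D \ D') D' (by simpa using hD') (by simp) hne hne2 hcl2 hcl
  have f1 : (cbd S D').Finite := h1.subset (by
    rintro ⟨x, s⟩ ⟨q1, q2, q3⟩
    exact ⟨q1, hD' q2, fun hc => q3 (hcl _ q2 _ q1 hc)⟩)
  have f2 : (cbd S (D \ D')).Finite := h1.subset (by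
    rintro ⟨x, s⟩ ⟨q1, q2, q3⟩
    exact ⟨q1, q2.1, fun hc => q3 (hcl2 _ q2 _ q1 hc)⟩)
  have e1 := tail_union hS f1 f2 hh
  have e2 := tail_union hS f1 f2 hh.inv
  have i1 := tail_inter D' (D \ D') h
  have i2 := tail_inter D' (D \ D') h⁻¹
  have hui : D' ∪ D \ D' = D := by simpa using hD'
  have hii : D' ∩ (D \ D') = ∅ := by simp
  rw [hui] at e1 e2
  rw [hii] at i1 i2
  have z1 := not_tail_empty h
  have z2 := not_tail_empty h⁻¹
  simp only [sep] at n1 n2 h2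
  grind

/-- vertices of the boundary -/
def vbd (S D : Set G) : Set G := Prod.fst '' cbd S D ∪ (fun p : G × G => p.1 * p.2) '' cbd S D

lemma finite_cuts {S : Set G} (hS : GenSet S) {B0 : Set G} (hB0 : B0.Finite) (k : ℕ) :
    {F : Set G | (cbd S F).Finite ∧ size S F ≤ k ∧ conn S F ∧ conn S Fᶜ ∧ (∃ x ∈ B0, x ∈ F) ∧
      ∃ x ∈ B0, x ∉ F}.Finite := by
  by_contra hinf
  set 𝒟 := {F : Set G | (cbd S F).Finite ∧ size S F ≤ k ∧ conn S F ∧ conn S Fᶜ ∧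
    (∃ x ∈ B0, x ∈ F) ∧ ∃ x ∈ B0, x ∉ F} with h𝒟
  have : Infinite 𝒟 := Set.infinite_coe_iff.2 hinf
  let 𝒰 : Ultrafilter 𝒟 := Filter.hyperfilter 𝒟
  let L : Set G := {x | ∀ᶠ F : 𝒟 in 𝒰, x ∈ F.1}
  have hL : ∀ x, ∀ᶠ F : 𝒟 in 𝒰, (x ∈ F.1 ↔ x ∈ L) := by
    intro x
    by_cases hx : x ∈ L
    · have : ∀ᶠ F : 𝒟 in 𝒰, x ∈ F.1 := hx
      exact this.mono fun F hF => ⟨fun _ => hx, fun _ => hF⟩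
    · have : ∀ᶠ F : 𝒟 in 𝒰, ¬ x ∈ F.1 := Ultrafilter.eventually_not.2 hx
      exact this.mono fun F hF => ⟨fun h => absurd h hF, fun h => absurd h hx⟩
  have hLf : ∀ B : Set G, B.Finite → ∀ᶠ F : 𝒟 in 𝒰, ∀ x ∈ B, (x ∈ F.1 ↔ x ∈ L) := by
    intro B hB
    exact (Filter.eventually_all_finite hB).2 fun x _ => hL x
  have hfinL : (cbd S L).Finite := by
    by_contra hc
    obtain ⟨P, hP, hPf, hPc⟩ := Set.Infinite.exists_subset_ncard_eq (s := cbd S L) hc (k + 1)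
    obtain ⟨F, hF⟩ := (hLf (Prod.fst '' P ∪ (fun p : G × G => p.1 * p.2) '' P)
      ((hPf.image _).union (hPf.image _))).exists
    have hsub : P ⊆ cbd S F.1 := by
      intro p hp
      obtain ⟨q1, q2, q3⟩ := hP hp
      refine ⟨q1, (hF _ (Or.inl ⟨p, hp, rfl⟩)).2 q2, fun hc => q3 ?_⟩
      exact (hF _ (Or.inr ⟨p, hp, rfl⟩)).1 hc
    have := Set.ncard_le_ncard hsub F.2.1
    have h2 := F.2.2.1
    rw [size] at h2
    omega
  have hV : (B0 ∪ vbd S L).Finite := hB0.union ((hfinL.image _).union (hfinL.image _))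
  have hco : ∀ᶠ F : 𝒟 in 𝒰, F.1 ≠ L := by
    have : ∀ᶠ F : 𝒟 in Filter.cofinite, F.1 ≠ L := by
      rw [Filter.eventually_cofinite]
      simp only [ne_eq, not_not]
      exact Set.Subsingleton.finite fun a ha b hb => Subtype.ext (ha.trans hb.symm)
    exact Filter.hyperfilter_le_cofinite this
  obtain ⟨F, hF, hne⟩ := ((hLf _ hV).and hco).exists
  obtain ⟨c1, c2, c3, c4, ⟨x, hx0, hx⟩, ⟨y, hy0, hy⟩⟩ := F.2
  apply hne
  have r1 := c3 (F.1 ∩ L) Set.inter_subset_left ⟨x, hx, (hF x (Or.inl hx0)).1 hx⟩ (by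
    rintro z ⟨hz1, hz2⟩ s hs hzs
    refine ⟨hzs, ?_⟩
    by_contra hc
    exact hc ((hF _ (Or.inr (Or.inr ⟨(z, s), ⟨hs, hz2, hc⟩, rfl⟩))).1 hzs))
  have r2 := c4 (F.1ᶜ ∩ Lᶜ) Set.inter_subset_left
    ⟨y, hy, fun hc => hy ((hF y (Or.inl hy0)).2 hc)⟩ (by
    rintro z ⟨hz1, hz2⟩ s hs hzs
    refine ⟨hzs, ?_⟩
    intro hc
    apply hzs
    exact (hF _ (Or.inr (Or.inl ⟨(z * s, s⁻¹), ⟨hS.inv s hs, hc, by simpa using hz2⟩, rfl⟩))).2 hc)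
  apply Set.Subset.antisymm
  · exact Set.inter_eq_left.1 r1
  · exact Set.compl_subset_compl.1 (Set.inter_eq_left.1 r2)

end Cuts

end

section
open Pointwise

namespace Cuts
variable {G : Type*} [Group G]

/-- crossing sets -/
def cross (A B : Set G) : Prop :=
  (∃ x, x ∈ A ∧ x ∈ B) ∧ (∃ x, x ∈ A ∧ x ∉ B) ∧ (∃ x, x ∉ A ∧ x ∈ B) ∧ (∃ x, x ∉ A ∧ x ∉ B)

lemma nested_of_not_cross {A B : Set G} (h : ¬ cross A B) :
    A ⊆ B ∨ B ⊆ A ∨ A ⊆ Bᶜ ∨ Aᶜ ⊆ B := by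
  by_contra hc
  push Not at hc
  obtain ⟨h1, h2, h3, h4⟩ := hc
  rw [Set.not_subset] at h1 h2 h3 h4
  obtain ⟨a, ha⟩ := h1
  obtain ⟨b, hb⟩ := h2
  obtain ⟨c, hc⟩ := h3
  obtain ⟨d, hd⟩ := h4
  simp only [Set.mem_compl_iff, not_not] at hc hd
  exact h ⟨⟨c, hc⟩, ⟨a, ha⟩, ⟨b, hb.2, hb.1⟩, ⟨d, hd⟩⟩

lemma cross_compl_right (A B : Set G) : cross A Bᶜ ↔ cross A B := by
  simp only [cross, Set.mem_compl_iff, not_not]; grind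

lemma cross_compl_left (A B : Set G) : cross Aᶜ B ↔ cross A B := by
  simp only [cross, Set.mem_compl_iff, not_not]; grind

lemma cross_comm (A B : Set G) : cross A B ↔ cross B A := by
  simp only [cross, and_comm]; grind

lemma cross_smul_aux {A B : Set G} (g : G) (h : cross A B) : cross (g • A) (g • B) := by
  obtain ⟨⟨a, ha⟩, ⟨b, hb⟩, ⟨c, hc⟩, ⟨d, hd⟩⟩ := h
  refine ⟨⟨g • a, ?_⟩, ⟨g • b, ?_⟩, ⟨g • c, ?_⟩, ⟨g • d, ?_⟩⟩ <;>
    simp only [Set.smul_mem_smul_set_iff] <;> assumption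

lemma cross_smul {A B : Set G} (g : G) : cross (g • A) (g • B) ↔ cross A B := by
  refine ⟨fun h => ?_, cross_smul_aux g⟩
  have := cross_smul_aux g⁻¹ h
  simpa using this

/-- all minimal separating cuts -/
def MM (S : Set G) (N : Subgroup G) : Set (Set G) := {F | ∃ h ∈ N, h ≠ 1 ∧ F ∈ Minset S h}

/-- the members of `MM` crossing `C` -/
def XX (S : Set G) (N : Subgroup G) (C : Set G) : Set (Set G) := {F | F ∈ MM S N ∧ cross F C}

/-- crossing number -/
noncomputable def mm (S : Set G) (N : Subgroup G) (C : Set G) : ℕ := (XX S N C).ncard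

/-- standing assumptions -/
structure Setup (S : Set G) (N : Subgroup G) (K : ℕ) : Prop where
  gs : GenSet S
  norm : N.Normal
  tf : ∀ h ∈ N, h ≠ 1 → InfOrd h
  bdd : ∀ h ∈ N, h ≠ 1 → ∃ D, (cbd S D).Finite ∧ sep D h ∧ size S D ≤ K

variable {S : Set G} {N : Subgroup G} {K : ℕ}

lemma Setup.MM_prop (H : Setup S N K) {F : Set G} (hF : F ∈ MM S N) :
    (cbd S F).Finite ∧ size S F ≤ K ∧ conn S F ∧ conn S Fᶜ := by
  obtain ⟨h, hN, h1, hm⟩ := hF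
  obtain ⟨D, d1, d2, d3⟩ := H.bdd h hN h1
  exact ⟨hm.1, (hm.2.2 D d1 d2).trans d3, Minset.conn H.gs (H.tf h hN h1) hm,
    Minset.conn H.gs (H.tf h hN h1) (Minset.compl H.gs (H.tf h hN h1) hm)⟩

lemma Setup.MM_compl (H : Setup S N K) {F : Set G} (hF : F ∈ MM S N) : Fᶜ ∈ MM S N := by
  obtain ⟨h, hN, h1, hm⟩ := hF
  exact ⟨h, hN, h1, Minset.compl H.gs (H.tf h hN h1) hm⟩

lemma conj_ne_one {h : G} (h1 : h ≠ 1) (g : G) : g * h * g⁻¹ ≠ 1 := by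
  intro hc; exact h1 (conj_eq_one_iff.1 hc)

lemma Setup.MM_smul (H : Setup S N K) {F : Set G} (hF : F ∈ MM S N) (g : G) : g • F ∈ MM S N := by
  obtain ⟨h, hN, h1, hm⟩ := hF
  exact ⟨_, H.norm.conj_mem h hN g, conj_ne_one h1 g, Minset.smul H.gs (H.tf h hN h1) hm g⟩

lemma cross_meets {F C : Set G} (hF : conn S F) (hc : cross F C) : ∃ x ∈ vbd S C, x ∈ F := by
  by_contra hno
  push Not at hno
  obtain ⟨⟨a, ha, ha'⟩, ⟨b, hb, hb'⟩, -⟩ := hc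
  have := hF (F ∩ C) Set.inter_subset_left ⟨a, ha, ha'⟩ (by
    rintro x ⟨hx, hx'⟩ s hs hxs
    refine ⟨hxs, ?_⟩
    by_contra hh
    exact hno x (Or.inl ⟨(x, s), ⟨hs, hx', hh⟩, rfl⟩) hx)
  rw [← this] at hb
  exact hb' hb.2

lemma Setup.XX_finite (H : Setup S N K) {C : Set G} (hC : (cbd S C).Finite) :
    (XX S N C).Finite := by
  have hB : (vbd S C).Finite := (hC.image _).union (hC.image _)
  refine (finite_cuts H.gs hB K).subset ?_
  rintro F ⟨hF, hc⟩
  obtain ⟨h1, h2, h3, h4⟩ := H.MM_prop hF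
  refine ⟨h1, h2, h3, h4, cross_meets h3 hc, ?_⟩
  exact cross_meets h4 ((cross_compl_left _ _).2 hc)

lemma XX_compl (C : Set G) : XX S N Cᶜ = XX S N C := by
  ext F; simp only [XX, Set.mem_ofPred_eq, cross_compl_right]

lemma mm_compl (C : Set G) : mm S N Cᶜ = mm S N C := by rw [mm, XX_compl, mm]

lemma Setup.mm_smul (H : Setup S N K) (g : G) (C : Set G) : mm S N (g • C) = mm S N C := by
  have : XX S N (g • C) = (fun F => g • F) '' XX S N C := by
    ext F
    constructor
    · rintro ⟨h1, h2⟩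
      refine ⟨g⁻¹ • F, ⟨H.MM_smul h1 _, ?_⟩, by simp⟩
      rw [← cross_smul g]; simpa using h2
    · rintro ⟨F, ⟨h1, h2⟩, rfl⟩
      exact ⟨H.MM_smul h1 _, (cross_smul g).2 h2⟩
  rw [mm, this, Set.ncard_image_of_injective _ (MulAction.injective g), mm]

lemma not_cross_corner_aux {F C D : Set G} (h1 : cross F (C ∩ D)) (h2 : cross F (C ∪ D)) :
    cross F C := by
  simp only [cross, Set.mem_inter_iff, Set.mem_union, not_or] at *
  obtain ⟨⟨a, ha⟩, ⟨b, hb⟩, ⟨c, hc⟩, ⟨d, hd⟩⟩ := h1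
  obtain ⟨⟨a', ha'⟩, ⟨b', hb'⟩, ⟨c', hc'⟩, ⟨d', hd'⟩⟩ := h2
  exact ⟨⟨a, ha.1, ha.2.1⟩, ⟨b', hb'.1, hb'.2.1⟩, ⟨c, hc.1, hc.2.1⟩, ⟨d', hd'.1, hd'.2.1⟩⟩

lemma cross_corner_or {F C D : Set G} (hCD : cross C D) (h : cross F (C ∩ D)) :
    cross F C ∨ cross F D := by
  simp only [cross, Set.mem_inter_iff, Set.mem_union] at *
  obtain ⟨⟨a, ha⟩, ⟨b, hb⟩, ⟨c, hc⟩, ⟨d, hd⟩⟩ := h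
  obtain ⟨⟨a', ha'⟩, ⟨b', hb'⟩, ⟨c', hc'⟩, ⟨d', hd'⟩⟩ := hCD
  grind

lemma Setup.mm_lt (H : Setup S N K) {C D : Set G} (hC : C ∈ MM S N) (hCD : cross C D)
    (fC : (cbd S C).Finite) (fD : (cbd S D).Finite) :
    mm S N (C ∩ D) + mm S N (C ∪ D) < mm S N C + mm S N D := by
  refine ncard_submod_lt (H.XX_finite fC) (H.XX_finite fD) ?_ ?_
  · rw [Set.ssubset_iff_of_subset]
    · refine ⟨C, Or.inr ⟨hC, hCD⟩, ?_⟩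
      rintro (⟨-, h1⟩ | ⟨-, h1⟩)
      · obtain ⟨-, -, ⟨x, hx, hx'⟩, -⟩ := h1
        exact hx hx'.1
      · obtain ⟨-, ⟨x, hx, hx'⟩, -⟩ := h1
        exact hx' (Or.inl hx)
    · rintro F (⟨h1, h2⟩ | ⟨h1, h2⟩)
      · rcases cross_corner_or hCD h2 with h | h
        · exact Or.inl ⟨h1, h⟩
        · exact Or.inr ⟨h1, h⟩
      · rw [← cross_compl_right, Set.compl_union] at h2
        have := cross_corner_or ((cross_compl_right _ _).2 ((cross_compl_left _ _).2 hCD)) h2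
        rw [cross_compl_right, cross_compl_right] at this
        rcases this with h | h
        · exact Or.inl ⟨h1, h⟩
        · exact Or.inr ⟨h1, h⟩
  · rintro F ⟨⟨h1, h2⟩, ⟨-, h3⟩⟩
    refine ⟨⟨h1, not_cross_corner_aux h2 h3⟩, ⟨h1, ?_⟩⟩
    rw [Set.inter_comm] at h2
    rw [Set.union_comm] at h3
    exact not_cross_corner_aux h2 h3

/-- optimal cuts -/
def Opt (S : Set G) (N : Subgroup G) (h : G) : Set (Set G) :=
  {C | C ∈ Minset S h ∧ ∀ C' ∈ Minset S h, mm S N C ≤ mm S N C'}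

lemma Setup.opt_nonempty (H : Setup S N K) {h : G} (hN : h ∈ N) (h1 : h ≠ 1) :
    (Opt S N h).Nonempty := by
  have hne : (Minset S h).Nonempty := by
    obtain ⟨D, d1, d2, -⟩ := H.bdd h hN h1
    obtain ⟨C, hC, hm⟩ := exists_minimalFor_of_wellFoundedLT
      (fun D => (cbd S D).Finite ∧ sep D h) (size S) ⟨D, d1, d2⟩
    refine ⟨C, hC.1, hC.2, fun D' f s => ?_⟩
    rcases le_total (size S C) (size S D') with h | h
    · exact h
    · exact hm ⟨f, s⟩ h
  obtain ⟨C0, hC0⟩ := hne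
  obtain ⟨C, hC, hm⟩ := exists_minimalFor_of_wellFoundedLT
      (fun D => D ∈ Minset S h) (mm S N) ⟨C0, hC0⟩
  refine ⟨C, hC, fun D' f => ?_⟩
  rcases le_total (mm S N C) (mm S N D') with h | h
  · exact h
  · exact hm f h

lemma Setup.opt_compl (H : Setup S N K) {h : G} (hN : h ∈ N) (h1 : h ≠ 1) {C : Set G}
    (hC : C ∈ Opt S N h) : Cᶜ ∈ Opt S N h :=
  ⟨Minset.compl H.gs (H.tf h hN h1) hC.1, fun C' hC' => by rw [mm_compl]; exact hC.2 C' hC'⟩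

lemma Setup.opt_smul (H : Setup S N K) {h : G} (hN : h ∈ N) (h1 : h ≠ 1) {C : Set G}
    (hC : C ∈ Opt S N h) (g : G) : g • C ∈ Opt S N (g * h * g⁻¹) := by
  refine ⟨Minset.smul H.gs (H.tf h hN h1) hC.1 g, fun C' hC' => ?_⟩
  have := Minset.smul H.gs (conj_infOrd (H.tf h hN h1) g) hC' g⁻¹
  have e : g⁻¹ * (g * h * g⁻¹) * g⁻¹⁻¹ = h := by group
  rw [e] at this
  have := hC.2 _ this
  rwa [H.mm_smul, ← H.mm_smul g⁻¹ C']

lemma Setup.S1 (H : Setup S N K) {h k : G} (hN : h ∈ N) (h1 : h ≠ 1)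
    {C D : Set G} (hC : C ∈ Opt S N h) (hD : D ∈ Opt S N k) (hCD : cross C D)
    (s1 : sep (C ∩ D) h) (s2 : sep (C ∪ D) k) : False := by
  have fC := hC.1.1
  have fD := hD.1.1
  have fi := cbd_inter_finite fC fD
  have fu := cbd_union_finite fC fD
  have l1 := hC.1.2.2 _ fi s1
  have l2 := hD.1.2.2 _ fu s2
  have l3 := size_submod fC fD
  have m1 : C ∩ D ∈ Minset S h := ⟨fi, s1, fun D' f s => by
    have := hC.1.2.2 D' f s
    omega⟩
  have m2 : C ∪ D ∈ Minset S k := ⟨fu, s2, fun D' f s => by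
    have := hD.1.2.2 D' f s
    omega⟩
  have q1 := hC.2 _ m1
  have q2 := hD.2 _ m2
  have := H.mm_lt (D := D) ⟨h, hN, h1, hC.1⟩ hCD fC fD
  omega

lemma Setup.opt_nested (H : Setup S N K) {h k : G} (hN : h ∈ N) (h1 : h ≠ 1)
    (kN : k ∈ N) (k1 : k ≠ 1)
    {C D : Set G} (hC : C ∈ Opt S N h) (hD : D ∈ Opt S N k) : ¬ cross C D := by
  have gs := H.gs
  have ih := H.tf h hN h1
  have ik := H.tf k kN k1
  have main : ∀ C D : Set G, C ∈ Opt S N h → D ∈ Opt S N k → tail C h → ¬ tail C h⁻¹ →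
      tail D k → ¬ tail D k⁻¹ → cross C D → False := by
    intro C D hC hD t1 t2 t3 t4 hCD
    have fC := hC.1.1
    have fD := hD.1.1
    have fC' := cbd_compl_finite gs fC
    have fD' := cbd_compl_finite gs fD
    have hD' := H.opt_compl kN k1 hD
    have hC' := H.opt_compl hN h1 hC
    have hCD' := (cross_compl_right C D).2 hCD
    have hDC := (cross_comm C D).1 hCD
    have hDC' := (cross_comm C Dᶜ).1 hCD'
    have a1 := H.S1 hN h1 hC hD hCD
    have a2 := H.S1 kN k1 hD hC hDC
    have a3 := H.S1 hN h1 hC hD' hCD'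
    have a4 := H.S1 kN k1 hD' hC hDC'
    have a5 : sep D h → sep C k → D ∈ Opt S N h := by
      intro s1 s2
      have e1 := hC.1.2.2 _ fD s1
      have e2 := hD.1.2.2 _ fC s2
      have e := le_antisymm e1 e2
      have cm : C ∈ Minset S k := ⟨fC, s2, fun D' f s => by
        have := hD.1.2.2 D' f s
        omega⟩
      refine ⟨⟨fD, s1, fun D' f s => by
        have := hC.1.2.2 D' f s
        omega⟩, fun C' hC'' => ?_⟩
      exact (hD.2 _ cm).trans (hC.2 _ hC'')
    have a6 : sep D h → sep C k → sep (C ∩ D) h → sep (C ∪ D) h → False := fun s1 s2 =>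
      H.S1 hN h1 hC (a5 s1 s2) hCD
    have a7 : sep D h → sep C k → sep (C ∩ Dᶜ) h → sep (C ∪ Dᶜ) h → False := fun s1 s2 =>
      H.S1 hN h1 hC (H.opt_compl hN h1 (a5 s1 s2)) hCD'
    simp only [sep, tail_inter, tail_union gs fC fD ih, tail_union gs fC fD ih.inv,
      tail_union gs fC fD ik, tail_union gs fC fD ik.inv,
      tail_union gs fD fC ih, tail_union gs fD fC ih.inv,
      tail_union gs fD fC ik, tail_union gs fD fC ik.inv,
      tail_union gs fC fD' ih, tail_union gs fC fD' ih.inv,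
      tail_union gs fC fD' ik, tail_union gs fC fD' ik.inv,
      tail_union gs fD' fC ih, tail_union gs fD' fC ih.inv,
      tail_union gs fD' fC ik, tail_union gs fD' fC ik.inv,
      tail_compl gs fD ih, tail_compl gs fD ih.inv, tail_compl gs fD ik,
      tail_compl gs fD ik.inv, t1, t2, t3, t4, true_and, false_and, true_or, false_or, and_true,
      and_false, or_true, or_false, not_true, not_false_iff, true_iff, false_iff, iff_true,
      iff_false, not_not] at a1 a2 a3 a4 a6 a7
    clear a5 hCD hDC hCD' hDC' hC' hD' fC fD fC' fD' hC hD
    by_cases p1 : tail D h <;> by_cases p2 : tail D h⁻¹ <;> by_cases p3 : tail C k <;>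
      by_cases p4 : tail C k⁻¹ <;> simp [p1, p2, p3, p4] at a1 a2 a3 a4 a6 a7
  intro hCD
  have hC' := H.opt_compl hN h1 hC
  have hD' := H.opt_compl kN k1 hD
  have sC : sep C h := hC.1.2.1
  have sD : sep D k := hD.1.2.1
  have eC := tail_compl gs hC.1.1 ih
  have eC2 := tail_compl gs hC.1.1 ih.inv
  have eD := tail_compl gs hD.1.1 ik
  have eD2 := tail_compl gs hD.1.1 ik.inv
  simp only [sep] at sC sD
  by_cases p : tail C h <;> by_cases q : tail D k
  · exact main C D hC hD p (by grind) q (by grind) hCD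
  · exact main C Dᶜ hC hD' p (by grind) (by grind) (by grind) ((cross_compl_right _ _).2 hCD)
  · exact main Cᶜ D hC' hD (by grind) (by grind) q (by grind) ((cross_compl_left _ _).2 hCD)
  · exact main Cᶜ Dᶜ hC' hD' (by grind) (by grind) (by grind) (by grind)
      ((cross_compl_left _ _).2 ((cross_compl_right _ _).2 hCD))

/-- the nested system -/
def EE (S : Set G) (N : Subgroup G) : Set (Set G) := {C | ∃ h ∈ N, h ≠ 1 ∧ C ∈ Opt S N h}

lemma EE_sub_MM {C : Set G} (hC : C ∈ EE S N) : C ∈ MM S N := by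
  obtain ⟨h, hN, h1, hC⟩ := hC
  exact ⟨h, hN, h1, hC.1⟩

lemma Setup.EE_compl (H : Setup S N K) {C : Set G} (hC : C ∈ EE S N) : Cᶜ ∈ EE S N := by
  obtain ⟨h, hN, h1, hC⟩ := hC
  exact ⟨h, hN, h1, H.opt_compl hN h1 hC⟩

lemma Setup.EE_smul (H : Setup S N K) (g : G) {C : Set G} (hC : C ∈ EE S N) : g • C ∈ EE S N := by
  obtain ⟨h, hN, h1, hC⟩ := hC
  exact ⟨_, H.norm.conj_mem h hN g, conj_ne_one h1 g, H.opt_smul hN h1 hC g⟩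

lemma Setup.EE_nonempty (H : Setup S N K) {C : Set G} (hC : C ∈ EE S N) : C.Nonempty := by
  obtain ⟨h, hN, h1, hC⟩ := hC
  have := hC.1.2.1
  rw [sep] at this
  by_cases p : tail C h
  · exact tail_nonempty p
  · exact tail_nonempty (h := h⁻¹) (by grind)

lemma Setup.EE_cbd (H : Setup S N K) {C : Set G} (hC : C ∈ EE S N) : (cbd S C).Nonempty := by
  rw [Set.nonempty_iff_ne_empty]
  intro h0
  have h1 := eq_univ_of_cbd H.gs h0 (H.EE_nonempty hC)
  obtain ⟨x, hx⟩ := H.EE_nonempty (H.EE_compl hC)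
  rw [h1] at hx
  exact hx trivial

theorem Setup.cutSys (H : Setup S N K) : CutSys N (EE S N) where
  inv g A hA := H.EE_smul g hA
  compl A hA := H.EE_compl hA
  nested A hA B hB := by
    obtain ⟨h, hN, h1, hA⟩ := hA
    obtain ⟨k, kN, k1, hB⟩ := hB
    exact nested_of_not_cross (H.opt_nested hN h1 kN k1 hA hB)
  finsep x y := by
    refine (finite_cuts H.gs (Set.toFinite {x, y}) K).subset ?_
    rintro A ⟨hA, hx, hy⟩
    obtain ⟨h1, h2, h3, h4⟩ := H.MM_prop (EE_sub_MM hA)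
    exact ⟨h1, h2, h3, h4, ⟨x, by simp, hx⟩, ⟨y, by simp, hy⟩⟩
  nonempty A hA := H.EE_nonempty hA
  finorb := by
    refine ⟨{A | A ∈ EE S N ∧ ∃ s ∈ S, 1 ∈ A ∧ s ∉ A}, ?_, fun A hA => hA.1, ?_⟩
    · refine (finite_cuts H.gs (H.gs.fin.insert 1) K).subset ?_
      rintro A ⟨hA, s, hs, h1, h2⟩
      obtain ⟨p1, p2, p3, p4⟩ := H.MM_prop (EE_sub_MM hA)
      exact ⟨p1, p2, p3, p4, ⟨1, by simp, h1⟩, ⟨s, by simp [hs], h2⟩⟩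
    · intro A hA
      obtain ⟨⟨x, s⟩, hs, hx, hxs⟩ := H.EE_cbd hA
      refine ⟨x, x⁻¹ • A, ⟨H.EE_smul _ hA, s, hs, ?_, ?_⟩, by simp⟩
      · rw [Set.mem_smul_set_iff_inv_smul_mem]; simpa using hx
      · rw [Set.mem_smul_set_iff_inv_smul_mem]; simpa using hxs
  finstab A hA := by
    obtain ⟨⟨x, s⟩, hs, hx, hxs⟩ := H.EE_cbd hA
    have hf := (H.MM_prop (EE_sub_MM hA)).1
    refine Set.Finite.of_finite_image (f := fun g : G => (g * x, s)) (hf.subset ?_) ?_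
    · rintro _ ⟨g, hg, rfl⟩
      have hg : g • A = A := hg
      have : (g * x, s) ∈ cbd S (g • A) := by
        rw [cbd_smul]; exact ⟨(x, s), ⟨hs, hx, hxs⟩, rfl⟩
      rwa [hg] at this
    · intro a _ b _ hab
      simpa using hab
  detect h hN h1 := by
    obtain ⟨C, hC⟩ := H.opt_nonempty hN h1
    have ih := H.tf h hN h1
    have hC' := H.opt_compl hN h1 hC
    have key : ∀ C ∈ Opt S N h, tail C h → ¬ tail C h⁻¹ → ∃ A ∈ EE S N,
      (∀ᶠ n : ℕ in Filter.atTop, h ^ n ∈ A) ∧ (∀ᶠ n : ℕ in Filter.atTop, h⁻¹ ^ n ∉ A) := by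
      intro C hC t1 t2
      exact ⟨C, ⟨h, hN, h1, hC⟩, t1, (tail_compl H.gs hC.1.1 ih.inv).2 t2⟩
    have eC := tail_compl H.gs hC.1.1 ih
    have eC2 := tail_compl H.gs hC.1.1 ih.inv
    have sC : sep C h := hC.1.2.1
    simp only [sep] at sC
    by_cases p : tail C h
    · exact key C hC p (by grind)
    · exact key Cᶜ hC' (by grind) (by grind)

end Cuts

end

section
open Pointwise

namespace Cuts

lemma freeGroup_finite {ι : Type*} (hfg : Group.FG (FreeGroup ι)) : Finite ι := by
  classical
  let χ : ι → (FreeGroup ι →* Multiplicative ℤ) := fun i =>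
    FreeGroup.lift (fun j => if j = i then Multiplicative.ofAdd 1 else 1)
  have h1 : ∀ w : FreeGroup ι, {i | χ i w ≠ 1}.Finite := by
    intro w
    induction w using FreeGroup.induction_on with
    | C1 => simp
    | of j =>
      refine (Set.finite_singleton j).subset ?_
      intro i hi
      simp only [χ, FreeGroup.lift_apply_of, Set.mem_ofPred_eq] at hi
      by_contra hc
      exact hi (if_neg (fun h => hc h.symm))
    | inv_of j ih => simpa using ih
    | mul x y ihx ihy =>
      refine (ihx.union ihy).subset ?_
      intro i hi
      simp only [Set.mem_ofPred_eq, Set.mem_union, map_mul] at hi ⊢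
      by_contra hc
      push Not at hc
      exact hi (by rw [hc.1, hc.2, one_mul])
  obtain ⟨T, hT⟩ := hfg
  have h2 : (⋃ w ∈ T, {i | χ i w ≠ 1}).Finite := T.finite_toSet.biUnion fun w _ => h1 w
  rw [← Set.finite_univ_iff]
  refine h2.subset ?_
  intro i _
  by_contra hc
  simp only [Set.mem_iUnion, not_exists, Set.mem_ofPred_eq, not_not] at hc
  have : χ i = 1 := by
    refine MonoidHom.eq_of_eqOn_dense hT ?_
    intro w hw
    exact hc w hw
  have h3 : χ i (FreeGroup.of i) = 1 := by rw [this]; rfl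
  simp [χ] at h3

section
variable {ι : Type*} [DecidableEq ι]

/-- words whose inverse ends with the letter `a` -/
def DD (a : ι × Bool) : Set (FreeGroup ι) := {w | (w⁻¹).toWord.getLast? = some a}

lemma last_mul (x : ι × Bool) (w : FreeGroup ι) (hw : w ≠ 1) (hsw : FreeGroup.mk [x] * w ≠ 1) :
    (FreeGroup.mk [x] * w).toWord.getLast? = w.toWord.getLast? := by
  have e : (FreeGroup.mk [x] * w).toWord = FreeGroup.reduce (x :: w.toWord) := by
    conv_lhs => rw [← FreeGroup.mk_toWord (x := w)]
    rw [FreeGroup.mul_mk, FreeGroup.toWord_mk]; rfl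
  have h1 : w.toWord ≠ [] := by simpa using hw
  have h2 : (FreeGroup.mk [x] * w).toWord ≠ [] := by
    intro h; exact hsw (FreeGroup.toWord_eq_nil_iff.1 h)
  rw [e] at h2 ⊢
  rw [FreeGroup.reduce.cons, FreeGroup.reduce_toWord] at h2 ⊢
  generalize w.toWord = L at h1 h2 ⊢
  cases L with
  | nil => exact absurd rfl h1
  | cons y L =>
    simp only at h2 ⊢
    split_ifs with hc
    · rw [if_pos hc] at h2
      cases L with
      | nil => exact absurd rfl h2
      | cons z L => simp [List.getLast?_cons_cons]
    · simp [List.getLast?_cons_cons]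

lemma DD_letter (a x : ι × Bool) :
    {w | ¬ (w ∈ DD a ↔ w * FreeGroup.mk [x] ∈ DD a)}.Finite := by
  refine (Set.toFinite {1, (FreeGroup.mk [x])⁻¹}).subset ?_
  intro w hw
  by_contra hc
  simp only [Set.mem_insert_iff, Set.mem_singleton_iff, not_or] at hc
  apply hw
  simp only [DD, Set.mem_ofPred_eq, mul_inv_rev]
  have : (FreeGroup.mk [x])⁻¹ = FreeGroup.mk [(x.1, !x.2)] := by
    rw [FreeGroup.inv_mk]; rfl
  rw [this, last_mul]
  · simpa using hc.1
  · rw [← this, ← mul_inv_rev]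
    intro h
    rw [inv_eq_one] at h
    exact hc.2 (eq_inv_of_mul_eq_one_left h)

lemma DD_ai (a : ι × Bool) (t : FreeGroup ι) : {w | ¬ (w ∈ DD a ↔ w * t ∈ DD a)}.Finite := by
  induction t using FreeGroup.induction_on with
  | C1 => simp
  | of j => exact DD_letter a (j, true)
  | inv_of j _ => exact DD_letter a (j, false)
  | mul x y iha ihb =>
    refine (iha.union (ihb.preimage (f := fun w => w * x) (mul_left_injective x).injOn)).subset ?_
    intro w hx
    simp only [Set.mem_ofPred_eq, Set.mem_union, Set.mem_preimage, ← mul_assoc] at hx ⊢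
    grind

lemma DD_sep (h : FreeGroup ι) (h1 : h ≠ 1) : ∃ (a : ι × Bool) (g c : FreeGroup ι),
    h = g * c * g⁻¹ ∧ (∀ᶠ n : ℕ in Filter.atTop, c ^ n ∉ DD a) ∧
      (∀ᶠ n : ℕ in Filter.atTop, c⁻¹ ^ n ∈ DD a) := by
  set L := FreeGroup.reduceCyclically h.toWord with hL
  have hr : FreeGroup.IsReduced h.toWord := FreeGroup.isReduced_toWord
  have hcr : FreeGroup.IsCyclicallyReduced L := FreeGroup.reduceCyclically.isCyclicallyReduced hr
  set c := FreeGroup.mk L with hc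
  set g := FreeGroup.mk (FreeGroup.reduceCyclically.conjugator h.toWord)
  have hconj : h = g * c * g⁻¹ := by
    rw [FreeGroup.inv_mk, FreeGroup.mul_mk, FreeGroup.mul_mk,
      FreeGroup.reduceCyclically.conj_conjugator_reduceCyclically, FreeGroup.mk_toWord]
  have hLne : L ≠ [] := by
    intro h0
    apply h1
    rw [hconj, hc, h0, FreeGroup.one_eq_mk.symm]
    simp
  have hpow : ∀ n : ℕ, (c ^ n).toWord = (List.replicate n L).flatten := by
    intro n
    rw [hc, FreeGroup.pow_mk, FreeGroup.toWord_mk]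
    exact (hcr.flatten_replicate n).isReduced.reduce_eq
  obtain ⟨a, ha⟩ : ∃ a, L.getLast? = some a := ⟨L.getLast hLne, List.getLast?_eq_getLast_of_ne_nil hLne⟩
  refine ⟨a, g, c, hconj, ?_, ?_⟩
  · filter_upwards [Filter.eventually_ge_atTop 1] with n hn
    intro hmem
    have hmem : ((c ^ n)⁻¹).toWord.getLast? = some a := hmem
    rw [FreeGroup.toWord_inv, hpow, FreeGroup.invRev, List.getLast?_reverse, List.head?_map,
      List.head?_flatten_replicate (by omega)] at hmem
    rw [Option.map_eq_some_iff] at hmem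
    obtain ⟨b, hb, hb2⟩ := hmem
    have := hcr.2 a ha b hb
    rw [← hb2] at this
    simp at this
  · filter_upwards [Filter.eventually_ge_atTop 1] with n hn
    change ((c⁻¹ ^ n)⁻¹).toWord.getLast? = some a
    rw [inv_pow, inv_inv, hpow, List.getLast?_flatten_replicate (by omega), ha]

end

variable {G : Type*} [Group G]

/-- extension of a cut from a finite index normal subgroup -/
def ext (N : Subgroup G) (D : Set G) : Set G := {g | g * (Quotient.out (g : G ⧸ N))⁻¹ ∈ D}

lemma ext_ai (N : Subgroup G) [N.Normal] [N.FiniteIndex] (D : Set G)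
    (hD : ∀ t ∈ N, {x | ¬ (x ∈ D ↔ x * t ∈ D)}.Finite) (t : G) :
    {x | ¬ (x ∈ ext N D ↔ x * t ∈ ext N D)}.Finite := by
  have hfin : Finite (G ⧸ N) := Subgroup.finite_quotient_of_finiteIndex
  let ν : G ⧸ N → G := fun q => Quotient.out q * t * (Quotient.out (q * (t : G ⧸ N)))⁻¹
  have out_eq : ∀ q : G ⧸ N, ((Quotient.out q : G) : G ⧸ N) = q := fun q => QuotientGroup.out_eq' q
  have hν : ∀ q, ν q ∈ N := by
    intro q
    rw [← QuotientGroup.eq_one_iff]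
    simp only [ν, QuotientGroup.mk_mul, QuotientGroup.mk_inv, out_eq]
    group
  have : (⋃ q : G ⧸ N, (fun x => x * Quotient.out q) '' {x | ¬ (x ∈ D ↔ x * ν q ∈ D)}).Finite :=
    Set.finite_iUnion fun q => (hD _ (hν q)).image _
  refine this.subset ?_
  intro x hx
  rw [Set.mem_iUnion]
  refine ⟨(x : G ⧸ N), x * (Quotient.out (x : G ⧸ N))⁻¹, ?_, by simp⟩
  have e : x * (Quotient.out (x : G ⧸ N))⁻¹ * ν x = x * t * (Quotient.out ((x * t : G) : G ⧸ N))⁻¹ := by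
    simp only [ν, QuotientGroup.mk_mul]
    group
  simp only [Set.mem_ofPred_eq, e]
  exact hx

lemma cbd_finite_of_ai {S : Set G} (hS : S.Finite) {D : Set G}
    (h : ∀ t, {x | ¬ (x ∈ D ↔ x * t ∈ D)}.Finite) : (cbd S D).Finite := by
  refine (hS.biUnion (t := fun s => (fun x => (x, s)) '' {x | ¬ (x ∈ D ↔ x * s ∈ D)})
    fun s _ => (h s).image _).subset ?_
  rintro ⟨x, s⟩ ⟨h1, h2, h3⟩
  rw [Set.mem_iUnion₂]
  exact ⟨s, h1, x, fun hc => h3 (hc.1 h2), rfl⟩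

lemma ext_tail (N : Subgroup G) [N.Normal] [N.FiniteIndex] (D : Set G)
    (hD : ∀ t ∈ N, {x | ¬ (x ∈ D ↔ x * t ∈ D)}.Finite) {h : G} (hN : h ∈ N) (hh : InfOrd h) :
    ∀ᶠ n : ℕ in Filter.atTop, (h ^ n ∈ ext N D ↔ h ^ n ∈ D) := by
  set r : G := (Quotient.out (1 : G ⧸ N))⁻¹ with hr
  have hrN : r ∈ N := by
    rw [← QuotientGroup.eq_one_iff, hr, QuotientGroup.mk_inv, QuotientGroup.out_eq', inv_one]
  have := (hD r hrN).preimage (f := fun n : ℕ => h ^ n) hh.injOn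
  have : ∀ᶠ n : ℕ in Filter.atTop, (h ^ n ∈ D ↔ h ^ n * r ∈ D) := by
    rw [← Nat.cofinite_eq_atTop, Filter.eventually_cofinite]
    exact this
  refine this.mono fun n hn => ?_
  rw [hn]
  have : ((h ^ n : G) : G ⧸ N) = 1 := (QuotientGroup.eq_one_iff _).2 (N.pow_mem hN n)
  simp only [ext, Set.mem_ofPred_eq, this, hr]

lemma freeGroup_infOrd {ι : Type*} (h : FreeGroup ι) (h1 : h ≠ 1) : InfOrd h := by
  intro a b hab
  exact injective_pow_iff_not_isOfFinOrder.2 (not_isOfFinOrder_of_isMulTorsionFree h1) hab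

theorem exists_setup (hfg : Group.FG G) (N : Subgroup G) [N.Normal] [N.FiniteIndex]
    {ι : Type*} (e : N ≃* FreeGroup ι) : ∃ (S : Set G) (K : ℕ), Setup S N K := by
  classical
  have hN : Group.FG N := inferInstance
  have hfgF : Group.FG (FreeGroup ι) := Group.fg_of_surjective (f := e.toMonoidHom) e.surjective
  have hι : Finite ι := freeGroup_finite hfgF
  obtain ⟨T, hT⟩ := hfg
  let S : Set G := (T : Set G) ∪ (T : Set G)⁻¹
  have hS : GenSet S := by
    refine ⟨T.finite_toSet.union T.finite_toSet.inv, ?_, ?_⟩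
    · rintro s (hs | hs)
      · exact Or.inr (by simpa using hs)
      · exact Or.inl hs
    · rw [eq_top_iff, ← hT]
      exact Subgroup.closure_mono Set.subset_union_left
  let D0 : ι × Bool → Set G := fun a => {x | ∃ hx : x ∈ N, e ⟨x, hx⟩ ∈ DD a}
  have hD0 : ∀ a, ∀ t ∈ N, {x | ¬ (x ∈ D0 a ↔ x * t ∈ D0 a)}.Finite := by
    intro a t ht
    refine ((DD_ai a (e ⟨t, ht⟩)).image (fun w => ((e.symm w : N) : G))).subset ?_
    intro x hx
    have hxN : x ∈ N := by
      by_contra hc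
      apply hx
      constructor
      · rintro ⟨h, _⟩; exact absurd h hc
      · rintro ⟨h, _⟩; exact absurd ((Subgroup.mul_mem_cancel_right N ht).1 h) hc
    refine ⟨e ⟨x, hxN⟩, ?_, by simp⟩
    intro hiff
    apply hx
    have e1 : e ⟨x, hxN⟩ * e ⟨t, ht⟩ = e ⟨x * t, N.mul_mem hxN ht⟩ := by
      rw [← map_mul]; rfl
    rw [e1] at hiff
    constructor
    · rintro ⟨h, h'⟩; exact ⟨_, hiff.1 h'⟩
    · rintro ⟨h, h'⟩; exact ⟨hxN, hiff.2 h'⟩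
  have hext := fun a => ext_ai N (D0 a) (hD0 a)
  have hfin := fun a => cbd_finite_of_ai hS.fin (hext a)
  have tf : ∀ h ∈ N, h ≠ 1 → InfOrd h := by
    intro h hN h1 a b hab
    have : e ⟨h, hN⟩ ≠ 1 := by
      intro hc
      rw [map_eq_one_iff e e.injective] at hc
      exact h1 (congrArg Subtype.val hc)
    refine freeGroup_infOrd _ this ?_
    simp only [← map_pow]
    congr 1
    exact Subtype.ext hab
  obtain ⟨K, hK⟩ : ∃ K, ∀ a, size S (ext N (D0 a)) ≤ K := by
    obtain ⟨K, hK⟩ := (Set.finite_range (fun a => size S (ext N (D0 a)))).bddAbove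
    exact ⟨K, fun a => hK ⟨a, rfl⟩⟩
  refine ⟨S, K, hS, inferInstance, tf, ?_⟩
  intro h hN h1
  have hne : e ⟨h, hN⟩ ≠ 1 := by
    intro hc
    rw [map_eq_one_iff e e.injective] at hc
    exact h1 (congrArg Subtype.val hc)
  obtain ⟨a, g, c, hconj, t1, t2⟩ := DD_sep _ hne
  set c' : G := ((e.symm c : N) : G) with hc'
  set g' : G := ((e.symm g : N) : G) with hg'
  have hcN : c' ∈ N := (e.symm c).2
  have hh : h = g' * c' * g'⁻¹ := by
    have := congrArg (fun w => ((e.symm w : N) : G)) hconj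
    simpa using this
  have hc1 : c' ≠ 1 := by
    intro h0
    rw [h0] at hh
    exact h1 (by simpa using hh)
  have hci := tf c' hcN hc1
  have key : ∀ w : FreeGroup ι, ((e.symm w : N) : G) ∈ D0 a ↔ w ∈ DD a := by
    intro w
    simp [D0]
  have e1 := ext_tail N (D0 a) (hD0 a) hcN hci
  have e2 := ext_tail N (D0 a) (hD0 a) (N.inv_mem hcN) hci.inv
  have s1 : ¬ tail (ext N (D0 a)) c' := by
    intro hc
    obtain ⟨n, q1, q2, q3⟩ := (hc.and (e1.and t1)).exists
    apply q3
    rw [← key]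
    have := q2.1 q1
    simpa [hc'] using this
  have s2 : tail (ext N (D0 a)) c'⁻¹ := by
    refine (e2.and t2).mono ?_
    rintro n ⟨q1, q2⟩
    rw [q1]
    have := (key _).2 q2
    simpa [hc'] using this
  refine ⟨g' • ext N (D0 a), cbd_smul_finite _ (hfin a), ?_, ?_⟩
  · rw [hh, sep_smul hS (hfin a) hci]
    rw [sep]
    tauto
  · rw [size_smul]; exact hK a

theorem exists_cutSys (hfg : Group.FG G) (H : Subgroup G) [H.FiniteIndex] [IsFreeGroup H] :
    ∃ (N : Subgroup G) (E : Set (Set G)), N.FiniteIndex ∧ IsFreeGroup N ∧ CutSys N E := by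
  let N := H.normalCore
  have hle : N ≤ H := H.normalCore_le
  have : IsFreeGroup (N.subgroupOf H) := inferInstance
  have hfree : IsFreeGroup N := IsFreeGroup.ofMulEquiv (Subgroup.subgroupOfEquivOfLe hle)
  obtain ⟨S, K, hset⟩ := exists_setup hfg N (IsFreeGroup.toFreeGroup N)
  exact ⟨N, _, inferInstance, hfree, hset.cutSys⟩

end Cuts

end

section
theorem exists_presentation {G : Type*} [Group G] (hfg : Group.FG G) (N : Subgroup G)
    [N.FiniteIndex] [IsFreeGroup N] : ∃ (m : ℕ) (π : FreeGroup (Fin m) →* G)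
      (R : Set (FreeGroup (Fin m))), Function.Surjective π ∧ R.Finite ∧ (∀ r ∈ R, π r = 1) ∧
      ∀ f : FreeGroup (Fin m) →* G, (∀ r ∈ R, f r = 1) → ∀ w, π w = 1 → f w = 1 := by
  obtain ⟨α, hα, φ, hφ⟩ := Group.fg_iff_exists_freeGroup_hom_surjective_finite.1 hfg
  obtain ⟨m, ⟨eα⟩⟩ := Finite.exists_equiv_fin α
  let π : FreeGroup (Fin m) →* G := φ.comp (FreeGroup.freeGroupCongr eα).symm.toMonoidHom
  have hπ : Function.Surjective π := hφ.comp (FreeGroup.freeGroupCongr eα).symm.surjective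
  let P := N.comap π
  have hP : P.FiniteIndex := ⟨by rw [Subgroup.index_comap_of_surjective N hπ]; exact Subgroup.FiniteIndex.index_ne_zero⟩
  have hPfg : Group.FG P := inferInstance
  obtain ⟨X, hX⟩ := hPfg
  let p : P →* N := π.subgroupComap N
  have hp : Function.Surjective p := by
    rintro ⟨y, hy⟩
    obtain ⟨x, rfl⟩ := hπ y
    exact ⟨⟨x, hy⟩, rfl⟩
  let σ : N →* P := IsFreeGroup.lift (fun a => Function.surjInv hp (IsFreeGroup.of a))
  have hσ : p.comp σ = MonoidHom.id N := by
    apply IsFreeGroup.ext_hom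
    intro a
    simp only [MonoidHom.comp_apply, σ, IsFreeGroup.lift_of, MonoidHom.id_apply]
    exact Function.surjInv_eq hp _
  refine ⟨m, π, (fun x : P => (((x⁻¹ * σ (p x) : P)) : FreeGroup (Fin m))) '' X, hπ,
    X.finite_toSet.image _, ?_, ?_⟩
  · rintro _ ⟨x, -, rfl⟩
    have h1 : p (x⁻¹ * σ (p x)) = 1 := by
      rw [map_mul, map_inv, ← MonoidHom.comp_apply p σ, hσ]; simp
    exact congrArg Subtype.val h1
  · intro f hf w hw
    have h1 : f.comp P.subtype = (f.comp P.subtype).comp (σ.comp p) := by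
      refine MonoidHom.eq_of_eqOn_dense hX ?_
      intro x hx
      have := hf _ ⟨x, hx, rfl⟩
      simp only [Subgroup.coe_mul, Subgroup.coe_inv, map_mul, map_inv, inv_mul_eq_one] at this
      exact this
    have hwP : w ∈ P := by
      change π w ∈ N
      rw [hw]; exact N.one_mem
    have h2 := DFunLike.congr_fun h1 ⟨w, hwP⟩
    have h3 : p ⟨w, hwP⟩ = 1 := Subtype.ext hw
    simp only [MonoidHom.comp_apply, h3, map_one] at h2
    exact h2

end

section
open FirstOrder Language

namespace Logic
variable {G : Type*} [Group G]

lemma exists_term (G : Type*) [Group G] {β : Type} (w : FreeGroup β) :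
    ∃ t : groupLang.Term β, ∀ x : β → G, t.realize x = FreeGroup.lift x w := by
  induction w using FreeGroup.induction_on with
  | C1 =>
    refine ⟨Term.func (L := groupLang) GroupFunc.one ![], fun x => ?_⟩
    rw [map_one]; rfl
  | of i => exact ⟨Term.var i, fun x => by simp⟩
  | inv_of i _ =>
    refine ⟨Term.func (L := groupLang) GroupFunc.inv ![Term.var i], fun x => ?_⟩
    rw [map_inv, FreeGroup.lift_apply_of]; rfl
  | mul a b iha ihb =>
    obtain ⟨s, hs⟩ := iha
    obtain ⟨t, ht⟩ := ihb
    refine ⟨Term.func (L := groupLang) GroupFunc.mul ![s, t], fun x => ?_⟩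
    rw [map_mul, ← hs, ← ht]; rfl

/-- quantifier-free definable -/
def QFDef {n k : ℕ} (P : (Fin n → G) → (Fin k → G) → Prop) : Prop :=
  ∃ φ : groupLang.BoundedFormula (Fin n) k, φ.IsQF ∧ ∀ v xs, φ.Realize v xs ↔ P v xs

variable {n k : ℕ}

lemma QFDef.word (w w' : FreeGroup (Fin n ⊕ Fin k)) :
    QFDef (fun (v : Fin n → G) (xs : Fin k → G) =>
      FreeGroup.lift (Sum.elim v xs) w = FreeGroup.lift (Sum.elim v xs) w') := by
  obtain ⟨t, ht⟩ := exists_term G w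
  obtain ⟨t', ht'⟩ := exists_term G w'
  refine ⟨t.bdEqual t', (BoundedFormula.IsAtomic.equal t t').isQF, fun v xs => ?_⟩
  rw [BoundedFormula.realize_bdEqual, ht, ht']

lemma QFDef.not {P : (Fin n → G) → (Fin k → G) → Prop} (h : QFDef P) :
    QFDef (fun v xs => ¬ P v xs) := by
  obtain ⟨φ, h1, h2⟩ := h
  exact ⟨φ.not, h1.not, fun v xs => by rw [BoundedFormula.realize_not, h2]⟩

lemma QFDef.and {P Q : (Fin n → G) → (Fin k → G) → Prop} (h : QFDef P) (h' : QFDef Q) :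
    QFDef (fun v xs => P v xs ∧ Q v xs) := by
  obtain ⟨φ, h1, h2⟩ := h
  obtain ⟨ψ, h1', h2'⟩ := h'
  exact ⟨φ ⊓ ψ, h1.inf h1', fun v xs => by rw [BoundedFormula.realize_inf, h2, h2']⟩

lemma QFDef.true : QFDef (fun (_ : Fin n → G) (_ : Fin k → G) => True) :=
  ⟨⊤, BoundedFormula.IsQF.top, fun v xs => by simp⟩

lemma QFDef.all {ι : Type*} [Finite ι] {P : ι → (Fin n → G) → (Fin k → G) → Prop}
    (h : ∀ i, QFDef (P i)) : QFDef (fun v xs => ∀ i, P i v xs) := by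
  classical
  have : Fintype ι := Fintype.ofFinite ι
  have key : ∀ s : Finset ι, QFDef (fun v xs => ∀ i ∈ s, P i v xs) := by
    intro s
    induction s using Finset.induction_on with
    | empty => simpa using QFDef.true
    | insert a s _ ih => simpa using (h a).and ih
  simpa using key Finset.univ

lemma QFDef.ex {ι : Type*} [Finite ι] {P : ι → (Fin n → G) → (Fin k → G) → Prop}
    (h : ∀ i, QFDef (P i)) : QFDef (fun v xs => ∃ i, P i v xs) := by
  have := (QFDef.all fun i => (h i).not).not
  simpa using this

lemma QFDef.imp_const {p : Prop} {P : (Fin n → G) → (Fin k → G) → Prop} (h : QFDef P) :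
    QFDef (fun v xs => p → P v xs) := by
  by_cases hp : p
  · simpa [hp] using h
  · simpa [hp] using QFDef.true

lemma isAE_alls {α : Type*} : ∀ {m : ℕ} (φ : groupLang.BoundedFormula α m), IsAE φ → IsAE φ.alls
  | 0, _, h => h
  | _ + 1, φ, h => isAE_alls φ.all (IsAE.all h)

theorem transfer {m : ℕ} {P : (Fin n → G) → (Fin (m + 1) → G) → Prop} (hP : QFDef P)
    {u v : Fin n → G}
    (htype : ∀ φ : groupLang.Formula (Fin n), IsAE φ → (φ.Realize u ↔ φ.Realize v))
    (hu : ∃ y : Fin m → G, ∀ g, P u (Fin.snoc y g)) : ∃ y : Fin m → G, ∀ g, P v (Fin.snoc y g) := by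
  obtain ⟨φ, h1, h2⟩ := hP
  have hae : IsAE (φ.not.ex).alls :=
    isAE_alls _ (IsAE.of_existential (IsExistentialQF.ex (IsExistentialQF.of_isQF h1.not)))
  have := htype _ hae
  rw [BoundedFormula.realize_alls, BoundedFormula.realize_alls] at this
  simp only [BoundedFormula.realize_ex, BoundedFormula.realize_not, h2] at this
  by_contra hc
  push Not at hc
  obtain ⟨y, hy⟩ := hu
  obtain ⟨g, hg⟩ := (this.2 hc) y
  exact hg (hy g)

end Logic

end

section
open FirstOrder Language

namespace Final
variable {G : Type*} [Group G]

/-- conjugacy of homomorphisms -/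
def cs (K : Type*) [Group K] (G : Type*) [Group G] : Setoid (K →* G) where
  r α β := ∃ g : G, ∀ x, β x = g * α x * g⁻¹
  iseqv :=
    { refl := fun α => ⟨1, fun x => by simp⟩
      symm := fun {α β} ⟨g, h⟩ => ⟨g⁻¹, fun x => by rw [h]; group⟩
      trans := fun {α β γ} ⟨g, h⟩ ⟨g', h'⟩ => ⟨g' * g, fun x => by rw [h', h]; group⟩ }

lemma bijective_of_classes (f : G →* G) {𝒦 : Set (Subgroup G)} (h𝒦 : 𝒦.Finite)
    (R : ∀ K : 𝒦, Set (K.1 →* G)) (hR : ∀ K, (R K).Finite)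
    (hrep : ∀ K, ∀ α : K.1 →* G, ∃ β ∈ R K, ∃ g : G, ∀ x, α x = g * β x * g⁻¹)
    (hrig : ∀ φ : G →* G, (∀ K ∈ 𝒦, ∃ g, ∀ x ∈ K, φ x = g * x * g⁻¹) → Function.Bijective φ)
    (hf : ∀ K, ∀ a ∈ R K, ∀ a' ∈ R K, (¬ ∃ g : G, ∀ x, a' x = g * a x * g⁻¹) →
      ¬ ∃ g : G, ∀ x, f (a' x) = g * f (a x) * g⁻¹) : Function.Bijective f := by
  have : Finite 𝒦 := h𝒦
  let X : 𝒦 → Type _ := fun K => Quotient (cs K.1 G)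
  have hX : ∀ K, Finite (X K) := by
    intro K
    have : Finite (R K) := hR K
    apply Finite.of_surjective (fun b : R K => (Quotient.mk (cs K.1 G) b.1))
    intro q
    induction q using Quotient.inductionOn with
    | h α =>
      obtain ⟨β, hβ, g, h⟩ := hrep K α
      exact ⟨⟨β, hβ⟩, Quotient.sound ⟨g, h⟩⟩
  let F : ∀ K, X K → X K := fun K => Quotient.map (sa := cs K.1 G) (sb := cs K.1 G)
    (fun α => f.comp α)
    (fun α β ⟨g, h⟩ => ⟨f g, fun x => by simp [h]⟩)
  have hFinj : ∀ K, Function.Injective (F K) := by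
    intro K q q' hq
    have key : ∀ q : X K, ∃ β ∈ R K, q = Quotient.mk (cs K.1 G) β := by
      intro q
      induction q using Quotient.inductionOn with
      | h α =>
        obtain ⟨β, hβ, g, h⟩ := hrep K α
        exact ⟨β, hβ, (Quotient.sound (s := cs K.1 G) ⟨g, h⟩).symm⟩
    obtain ⟨a, ha, rfl⟩ := key q
    obtain ⟨a', ha', rfl⟩ := key q'
    have h1 : ∃ g : G, ∀ x, f (a' x) = g * f (a x) * g⁻¹ :=
      Quotient.exact (s := cs K.1 G) hq
    have h2 : ∃ g : G, ∀ x, a' x = g * a x * g⁻¹ := by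
      by_contra hc
      exact hf K a ha a' ha' hc h1
    exact Quotient.sound (s := cs K.1 G) h2
  let Fs : (Σ K, X K) → (Σ K, X K) := fun p => ⟨p.1, F p.1 p.2⟩
  have hFs : Function.Injective Fs := by
    rintro ⟨K, q⟩ ⟨K', q'⟩ h
    simp only [Fs, Sigma.mk.injEq] at h
    obtain ⟨rfl, h⟩ := h
    rw [hFinj K (eq_of_heq h)]
  have : Finite (Σ K, X K) := inferInstance
  let e : Equiv.Perm (Σ K, X K) := Equiv.ofBijective Fs (Finite.injective_iff_bijective.1 hFs)
  obtain ⟨j, hj, hej⟩ := (isOfFinOrder_of_finite e).exists_pow_eq_one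
  have hpow : ∀ (j : ℕ) (K : 𝒦) (α : K.1 →* G), (e ^ j) ⟨K, Quotient.mk (cs K.1 G) α⟩ =
      ⟨K, Quotient.mk (cs K.1 G) (((show Monoid.End G from f) ^ j : Monoid.End G).comp α)⟩ := by
    intro j
    induction j with
    | zero => intro K α; rfl
    | succ j ih =>
      intro K α
      rw [pow_succ', Equiv.Perm.mul_apply, ih]
      rw [pow_succ']
      rfl
  have hb : Function.Bijective ((show Monoid.End G from f) ^ j : Monoid.End G) := by
    apply hrig
    intro K hK
    have h1 := hpow j ⟨K, hK⟩ K.subtype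
    rw [hej, Equiv.Perm.one_apply, Sigma.mk.injEq] at h1
    obtain ⟨g, hg⟩ := Quotient.exact (s := cs K G) (eq_of_heq h1.2)
    exact ⟨g, fun x hx => hg ⟨x, hx⟩⟩
  rw [Monoid.End.coe_pow] at hb
  obtain ⟨i, rfl⟩ := Nat.exists_eq_succ_of_ne_zero hj.ne'
  refine ⟨?_, ?_⟩
  · have := hb.1
    rw [Function.iterate_succ] at this
    exact this.of_comp
  · have := hb.2
    rw [Function.iterate_succ'] at this
    exact this.of_comp

lemma lift_map {n m : ℕ} (v : Fin n → G) (xs : Fin (m + 1) → G) (w : FreeGroup (Fin m)) :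
    FreeGroup.lift (Sum.elim v xs) (FreeGroup.map (fun i => Sum.inr (Fin.castSucc i)) w) =
      FreeGroup.lift (fun i => xs (Fin.castSucc i)) w := by
  induction w using FreeGroup.induction_on with
  | C1 => simp
  | of i => simp
  | inv_of i _ => simp
  | mul a b iha ihb => simp only [map_mul, iha, ihb]

theorem main (hfg : Group.FG G) (hvf : VirtuallyFree G) (hco : CoHopfian G)
    (n : ℕ) (u v : Fin n → G)
    (htype : ∀ φ : groupLang.Formula (Fin n), IsAE φ → (φ.Realize u ↔ φ.Realize v)) :
    ∃ σ : G ≃* G, ∀ i, σ (u i) = v i := by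
  obtain ⟨H, hH, ⟨hHf⟩⟩ := hvf
  obtain ⟨N, E, hN, hNf, hE⟩ := Cuts.exists_cutSys hfg H
  obtain ⟨m, π, R, hπ, hRf, hR1, hR2⟩ := exists_presentation hfg N
  obtain ⟨𝒦, h𝒦, hKf, hrig⟩ := hE.rigid hco
  have : ∀ K : 𝒦, ∃ R : Set (K.1 →* G), R.Finite ∧
      ∀ α : K.1 →* G, ∃ β ∈ R, ∃ g : G, ∀ x, α x = g * β x * g⁻¹ := fun K =>
    haveI := hKf K.1 K.2
    hE.hom_finite K.1
  choose A hAf hA using this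
  choose s hs using hπ
  have i1 : Finite 𝒦 := h𝒦
  have i2 : ∀ K, Finite (A K) := hAf
  have i3 : ∀ K : 𝒦, Finite K.1 := fun K => hKf K.1 K.2
  have i4 : Finite R := hRf
  let P : (Fin n → G) → (Fin (m + 1) → G) → Prop := fun v xs =>
    (∀ r : R, FreeGroup.lift (fun i => xs (Fin.castSucc i)) r.1 = 1) ∧
    (∀ i, FreeGroup.lift (fun i => xs (Fin.castSucc i)) (s (u i)) = v i) ∧
    ∀ K : 𝒦, ∀ a a' : A K, (¬ ∃ g : G, ∀ x, a'.1 x = g * a.1 x * g⁻¹) →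
      ∃ x : K.1, ¬ FreeGroup.lift (fun i => xs (Fin.castSucc i)) (s (a'.1 x)) =
        xs (Fin.last m) * FreeGroup.lift (fun i => xs (Fin.castSucc i)) (s (a.1 x)) *
          (xs (Fin.last m))⁻¹
  have hP : Logic.QFDef P := by
    let μ : FreeGroup (Fin m) →* FreeGroup (Fin n ⊕ Fin (m + 1)) :=
      FreeGroup.map (fun i => Sum.inr (Fin.castSucc i))
    let t : FreeGroup (Fin n ⊕ Fin (m + 1)) := FreeGroup.of (Sum.inr (Fin.last m))
    refine Logic.QFDef.and (Logic.QFDef.all fun r => ?_)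
      (Logic.QFDef.and (Logic.QFDef.all fun i => ?_)
      (Logic.QFDef.all fun K => Logic.QFDef.all fun a => Logic.QFDef.all fun a' =>
        Logic.QFDef.imp_const (Logic.QFDef.ex fun x => Logic.QFDef.not ?_)))
    · have := Logic.QFDef.word (G := G) (μ r.1) 1
      simpa only [μ, lift_map, map_one] using this
    · have := Logic.QFDef.word (G := G) (μ (s (u i))) (FreeGroup.of (Sum.inl i))
      simpa only [μ, lift_map, FreeGroup.lift_apply_of, Sum.elim_inl] using this
    · have := Logic.QFDef.word (G := G) (μ (s (a'.1 x))) (t * μ (s (a.1 x)) * t⁻¹)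
      simpa only [μ, t, lift_map, map_mul, map_inv, FreeGroup.lift_apply_of, Sum.elim_inr] using this
  obtain ⟨y, hy⟩ := Logic.transfer hP htype (by
    refine ⟨fun i => π (FreeGroup.of i), fun g => ?_⟩
    have hl : FreeGroup.lift (fun i => π (FreeGroup.of i)) = π := by
      ext i; simp
    simp only [P, Fin.snoc_castSucc, Fin.snoc_last, hl, hs]
    refine ⟨fun r => hR1 _ r.2, fun i => trivial, fun K a a' hn => ?_⟩
    by_contra hc
    push Not at hc
    exact hn ⟨g, hc⟩)
  simp only [P, Fin.snoc_castSucc, Fin.snoc_last] at hy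
  have h1 := (hy 1).1
  have h2 := (hy 1).2.1
  have h3 := fun g => (hy g).2.2
  have hker := hR2 (FreeGroup.lift y) (fun r hr => h1 ⟨r, hr⟩)
  let f : G →* G := MonoidHom.liftOfSurjective π (fun x => ⟨s x, hs x⟩)
    ⟨FreeGroup.lift y, fun w hw => hker w hw⟩
  have hf : ∀ w, f (π w) = FreeGroup.lift y w := fun w =>
    MonoidHom.liftOfRightInverse_comp_apply π _ _ ⟨FreeGroup.lift y, fun w hw => hker w hw⟩ w
  have hf' : ∀ x, f x = FreeGroup.lift y (s x) := fun x => by rw [← hf, hs]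
  have hb : Function.Bijective f := by
    apply bijective_of_classes f h𝒦 A hAf hA hrig
    rintro K a ha a' ha' hn ⟨g, hg⟩
    obtain ⟨x, hx⟩ := h3 g K ⟨a, ha⟩ ⟨a', ha'⟩ hn
    apply hx
    rw [← hf', ← hf']
    exact hg x
  exact ⟨MulEquiv.ofBijective f hb, fun i => (hf' _).trans (h2 i)⟩

end Final

end

/-- Finitely generated co-Hopfian virtually free groups are ∀∃-homogeneous. -/
theorem coHopfian_virtuallyFree_aeHomogeneous
    (G : Type*) [Group G] (hfg : Group.FG G) (hvf : VirtuallyFree G) (hco : CoHopfian G)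
    (n : ℕ) (u v : Fin n → G)
    (htype : ∀ φ : groupLang.Formula (Fin n), IsAE φ → (φ.Realize u ↔ φ.Realize v)) :
    ∃ σ : G ≃* G, ∀ i, σ (u i) = v i := by
  exact Final.main hfg hvf hco n u v htype
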